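/- arXiv:1410.7486 — 2 statements merged into one kernel-verified Lean document; each statement's English description precedes it below -/
import Mathlib

section
/- Let s ∈ (−d/2, d/2 − 1). There exists a constant C > 0, depending only on s, d and the Littlewood–Paley functions, such that for all Schwartz functions u and v on ℝ^d, ‖uv‖_{Ḣ^s} ≤ C ‖u‖_{Ḣ^{s+1}} ‖v‖_{Ḃ^{d/2−1}_{2,∞}}. -/
open MeasureTheory SchwartzMap Real Complex
open scoped FourierTransform ENNReal NNReal

noncomputable section

/-- Euclidean space `ℝ^d`. -/
abbrev Ed (d : ℕ) := EuclideanSpace ℝ (Fin d)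

/-- A Littlewood–Paley pair `(χ, φ)` on `ℝ^d`: smooth functions with
`supp χ ⊆ {|ξ| ≤ 4/3}`, `supp φ ⊆ {3/4 ≤ |ξ| ≤ 8/3}`,
`χ(ξ) + ∑_{q ≥ 0} φ(2^{-q}ξ) = 1` for all `ξ`, and `∑_{q ∈ ℤ} φ(2^{-q}ξ) = 1` for `ξ ≠ 0`. -/
structure LPPair (d : ℕ) where
  χ : Ed d → ℝ
  φ : Ed d → ℝ
  smooth_χ : ContDiff ℝ (⊤ : ℕ∞) χ
  smooth_φ : ContDiff ℝ (⊤ : ℕ∞) φ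
  supp_χ : Function.support χ ⊆ {ξ : Ed d | ‖ξ‖ ≤ 4/3}
  supp_φ : Function.support φ ⊆ {ξ : Ed d | 3/4 ≤ ‖ξ‖ ∧ ‖ξ‖ ≤ 8/3}
  sum_one : ∀ ξ : Ed d, χ ξ + ∑' q : ℕ, φ ((2:ℝ) ^ (-(q:ℤ)) • ξ) = 1
  sum_one' : ∀ ξ : Ed d, ξ ≠ 0 → ∑' q : ℤ, φ ((2:ℝ) ^ (-q) • ξ) = 1

variable {d : ℕ}

/-- Homogeneous Littlewood–Paley block `Δ̇_q u = 𝓕⁻¹(φ(2^{-q}·) 𝓕u)`. -/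
def lpBlock (P : LPPair d) (q : ℤ) (u : Ed d → ℂ) : Ed d → ℂ :=
  𝓕⁻ (fun ξ => (P.φ ((2:ℝ) ^ (-q) • ξ) : ℂ) * 𝓕 u ξ)

/-- Low-frequency cut-off `Ṡ_q u = 𝓕⁻¹(χ(2^{-q}·) 𝓕u)`. -/
def sBlock (P : LPPair d) (q : ℤ) (u : Ed d → ℂ) : Ed d → ℂ :=
  𝓕⁻ (fun ξ => (P.χ ((2:ℝ) ^ (-q) • ξ) : ℂ) * 𝓕 u ξ)

/-- `ℓ^r(ℤ)`-norm of a family of extended nonnegative reals. -/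
def ellNorm (r : ℝ≥0∞) (a : ℤ → ℝ≥0∞) : ℝ≥0∞ :=
  if r = ∞ then ⨆ q, a q else (∑' q, a q ^ r.toReal) ^ (1 / r.toReal)

/-- Homogeneous Besov norm `‖u‖_{Ḃ^s_{p,r}}`. -/
def besovNorm (P : LPPair d) (s : ℝ) (p r : ℝ≥0∞) (u : Ed d → ℂ) : ℝ≥0∞ :=
  ellNorm r (fun q => (2:ℝ≥0∞) ^ ((q : ℝ) * s) * eLpNorm (lpBlock P q u) p volume)

/-- Homogeneous Sobolev norm `‖u‖_{Ḣ^s} = ‖ |ξ|^s 𝓕u(ξ) ‖_{L²_ξ}`. -/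
def sobNorm (s : ℝ) (u : Ed d → ℂ) : ℝ≥0∞ :=
  eLpNorm (fun ξ : Ed d => ‖ξ‖ ^ s * ‖𝓕 u ξ‖) 2 volume

/-- Hybrid Besov norm `‖u‖_{𝓑̇^s}`. -/
def hybridNorm (P : LPPair d) (s : ℝ) (u : Ed d → ℂ) : ℝ≥0∞ :=
  (∑' q : ℤ, if q < 0 then
      ((2:ℝ≥0∞) ^ ((q : ℝ) * s) * eLpNorm (lpBlock P q u) 2 volume) ^ (2:ℝ) else 0) ^ (1/2 : ℝ)
  + ∑' q : ℤ, if 0 ≤ q then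
      (2:ℝ≥0∞) ^ ((q : ℝ) * (d : ℝ) / 2) * eLpNorm (lpBlock P q u) 2 volume else 0

/-- High-frequency norm `‖u‖^h_{Ḃ^σ_{2,1}}`. -/
def highNorm (P : LPPair d) (σ : ℝ) (u : Ed d → ℂ) : ℝ≥0∞ :=
  ∑' q : ℤ, if 0 ≤ q then (2:ℝ≥0∞) ^ ((q : ℝ) * σ) * eLpNorm (lpBlock P q u) 2 volume else 0

/-!
On the Fourier side the product is the convolution of `û` and `v̂`, and both norms are weighted `L²`
norms, so everything reduces to convolutions of functions restricted to the dyadic shells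
`2 ^ m ≤ ‖ξ‖ < 2 ^ (m + 1)`. The `L²` norm over shell `m` of the convolution of pieces living on
the shells `j` and `k` is bounded, by Cauchy–Schwarz or Young, by the square root of the volume of
any one of the three shells; take the smallest. The interaction vanishes unless the two largest of
`m, j, k` differ by at most one, and then this gain beats the Sobolev weights by the factor
`2 ^ (-ε|m - j| - ε|m - k|)`, where `ε` is the room left in `a < d / 2`, `b < d / 2` and
`0 < a + b` for `Ḣ^a · Ḃ^b_{2,∞} → Ḣ^(a + b - d / 2)`. Such a factor is summable, and the sum over
`j` and `k` is estimated by Cauchy–Schwarz weighted with it; only the supremum over the shells of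
the energy of `v̂` enters, and that is controlled by the Besov norm because a dyadic shell meets
only three Littlewood–Paley blocks.
-/
section CauchySchwarz

variable {α : Type*} [MeasurableSpace α] {μ : Measure α}

lemma sq_lintegral_mul_le {f g : α → ℝ≥0∞} (hf : AEMeasurable f μ) (hg : AEMeasurable g μ) :
    (∫⁻ x, f x * g x ∂μ) ^ 2 ≤ (∫⁻ x, f x ^ 2 ∂μ) * ∫⁻ x, g x ^ 2 ∂μ := by
  have sq_sqrt (a : ℝ≥0∞) : (a ^ (1 / 2 : ℝ)) ^ 2 = a := by
    rw [← ENNReal.rpow_natCast, ← ENNReal.rpow_mul]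
    norm_num
  have hölder := ENNReal.lintegral_mul_le_Lp_mul_Lq μ Real.HolderConjugate.two_two hf hg
  simpa only [mul_pow, sq_sqrt, ENNReal.rpow_ofNat, Pi.mul_apply] using pow_le_pow_left' hölder 2

lemma sq_setLIntegral_le {f : α → ℝ≥0∞} (hf : Measurable f) (s : Set α) :
    (∫⁻ x in s, f x ∂μ) ^ 2 ≤ μ s * ∫⁻ x in s, f x ^ 2 ∂μ := by
  simpa using sq_lintegral_mul_le (μ := μ.restrict s) (f := 1) aemeasurable_const hf.aemeasurable

lemma sq_lintegral_mul_le_lintegral_mul_sq {w f : α → ℝ≥0∞} (hw : Measurable w)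
    (hf : Measurable f) :
    (∫⁻ x, w x * f x ∂μ) ^ 2 ≤ (∫⁻ x, w x ∂μ) * ∫⁻ x, w x * f x ^ 2 ∂μ := by
  have h := sq_setLIntegral_le (μ := μ.withDensity w) hf Set.univ
  simpa [withDensity_apply, lintegral_withDensity_eq_lintegral_mul _ hw hf,
    lintegral_withDensity_eq_lintegral_mul _ hw (hf.pow_const 2)] using h

lemma sq_tsum_le_tsum_mul_tsum_inv_mul_sq {ι : Type*} {w : ι → ℝ≥0∞} (hw₀ : ∀ i, w i ≠ 0)
    (hw : ∀ i, w i ≠ ∞) (x : ι → ℝ≥0∞) :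
    (∑' i, x i) ^ 2 ≤ (∑' i, w i) * ∑' i, (w i)⁻¹ * x i ^ 2 := by
  let _ : MeasurableSpace ι := ⊤
  have h := sq_lintegral_mul_le_lintegral_mul_sq (μ := (Measure.count : Measure ι))
    (w := w) (f := fun i ↦ (w i)⁻¹ * x i) measurable_from_top measurable_from_top
  have sq_eq (i : ι) : w i * ((w i)⁻¹ * x i) ^ 2 = (w i)⁻¹ * x i ^ 2 := by
    rw [mul_pow, sq (w i)⁻¹, ← mul_assoc, ← mul_assoc, ENNReal.mul_inv_cancel (hw₀ i) (hw i),
      one_mul]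
  simpa only [lintegral_count, sq_eq, ENNReal.mul_inv_cancel_left (hw₀ _) (hw _)] using h

lemma sq_eLpNorm_two {F : Type*} [NormedAddCommGroup F] (f : α → F) :
    eLpNorm f 2 μ ^ 2 = ∫⁻ x, ‖f x‖ₑ ^ 2 ∂μ := by
  simpa using eLpNorm_nnreal_pow_eq_lintegral (p := 2) (μ := μ) (f := f) two_ne_zero

lemma lintegral_indicator_pow {f : α → ℝ≥0∞} {s : Set α} (hs : MeasurableSet s) {n : ℕ}
    (hn : n ≠ 0) : ∫⁻ x, s.indicator f x ^ n ∂μ = ∫⁻ x in s, f x ^ n ∂μ := by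
  rw [← lintegral_indicator hs]
  congr with x
  by_cases hx : x ∈ s <;> simp [hx, hn]

end CauchySchwarz

section Convolution

variable {G : Type*} [AddCommGroup G] [MeasurableSpace G] [MeasurableAdd₂ G] [MeasurableNeg G]
  {μ : Measure G} [μ.IsAddLeftInvariant] {f g : G → ℝ≥0∞} {S T : Set G}

lemma sq_lconvolution_le [μ.IsNegInvariant] (hf : Measurable f) (hg : Measurable g) (x : G) :
    (f ⋆ₗ[μ] g) x ^ 2 ≤ (∫⁻ y, f y ^ 2 ∂μ) * ∫⁻ y, g y ^ 2 ∂μ := by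
  refine (sq_lintegral_mul_le hf.aemeasurable (by fun_prop)).trans_eq ?_
  congr 1
  simpa [neg_add_eq_sub] using lintegral_sub_left_eq_self (fun y ↦ g y ^ 2) x

lemma lintegral_sq_lconvolution_le [SFinite μ] (hf : Measurable f) (hg : Measurable g) :
    ∫⁻ x, (f ⋆ₗ[μ] g) x ^ 2 ∂μ ≤ (∫⁻ x, f x ∂μ) ^ 2 * ∫⁻ x, g x ^ 2 ∂μ := by
  calc ∫⁻ x, (f ⋆ₗ[μ] g) x ^ 2 ∂μ
      ≤ ∫⁻ x, (∫⁻ y, f y ∂μ) * ∫⁻ y, f y * g (-y + x) ^ 2 ∂μ ∂μ :=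
        lintegral_mono fun x ↦ sq_lintegral_mul_le_lintegral_mul_sq hf (by fun_prop)
    _ = (∫⁻ y, f y ∂μ) * ∫⁻ y, ∫⁻ x, f y * g (-y + x) ^ 2 ∂μ ∂μ := by
        rw [lintegral_const_mul _ (by fun_prop), lintegral_lintegral_swap (by fun_prop)]
    _ = (∫⁻ y, f y ∂μ) * ∫⁻ y, f y * ∫⁻ x, g x ^ 2 ∂μ ∂μ := by
        congr with y
        rw [lintegral_const_mul _ (by fun_prop), lintegral_add_left_eq_self (fun x ↦ g x ^ 2)]
    _ = (∫⁻ x, f x ∂μ) ^ 2 * ∫⁻ x, g x ^ 2 ∂μ := by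
        rw [lintegral_mul_const _ hf, sq, mul_assoc]

lemma lintegral_sq_indicator_lconvolution_le [SFinite μ] (hf : Measurable f) (hg : Measurable g)
    (hS : MeasurableSet S) :
    ∫⁻ x, (S.indicator f ⋆ₗ[μ] g) x ^ 2 ∂μ
      ≤ μ S * ((∫⁻ x in S, f x ^ 2 ∂μ) * ∫⁻ x, g x ^ 2 ∂μ) := by
  grw [lintegral_sq_lconvolution_le (hf.indicator hS) hg, lintegral_indicator hS,
    sq_setLIntegral_le hf, mul_assoc]

theorem setLIntegral_sq_indicator_lconvolution_indicator_le [μ.IsNegInvariant] [SFinite μ]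
    (hf : Measurable f) (hg : Measurable g) (hS : MeasurableSet S) (hT : MeasurableSet T)
    (A : Set G) :
    ∫⁻ x in A, (S.indicator f ⋆ₗ[μ] T.indicator g) x ^ 2 ∂μ
      ≤ min (μ A) (min (μ S) (μ T)) *
        ((∫⁻ x in S, f x ^ 2 ∂μ) * ∫⁻ x in T, g x ^ 2 ∂μ) := by
  have hfS := hf.indicator hS
  have hgT := hg.indicator hT
  simp only [min_mul_of_nonneg _ _ zero_le, ← lintegral_indicator_pow hS two_ne_zero,
    ← lintegral_indicator_pow hT two_ne_zero]
  refine le_min ?_ (le_min ?_ ?_)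
  · exact (lintegral_mono fun x ↦ sq_lconvolution_le hfS hgT x).trans_eq (by simp [mul_comm])
  · grw [setLIntegral_le_lintegral, lintegral_sq_indicator_lconvolution_le hf hgT hS]
    simp only [lintegral_indicator_pow hS two_ne_zero, le_refl]
  · grw [setLIntegral_le_lintegral, lconvolution_comm,
      lintegral_sq_indicator_lconvolution_le hg hfS hT]
    rw [mul_comm (∫⁻ x, S.indicator f x ^ 2 ∂μ), lintegral_indicator_pow hT two_ne_zero]

end Convolution

section DyadicKernel

lemma two_rpow_ne_zero (x : ℝ) : (2 : ℝ≥0∞) ^ x ≠ 0 := by simp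

lemma two_rpow_ne_top (x : ℝ) : (2 : ℝ≥0∞) ^ x ≠ ∞ := by simp

lemma two_rpow_add (x y : ℝ) : (2 : ℝ≥0∞) ^ (x + y) = 2 ^ x * 2 ^ y :=
  ENNReal.rpow_add x y two_ne_zero ENNReal.ofNat_ne_top

lemma two_rpow_le_two_rpow {x y : ℝ} (h : x ≤ y) : (2 : ℝ≥0∞) ^ x ≤ 2 ^ y :=
  ENNReal.rpow_le_rpow_of_exponent_le one_le_two h

lemma two_rpow_two_mul (x : ℝ) : (2 : ℝ≥0∞) ^ (2 * x) = (2 ^ x) ^ 2 := by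
  rw [mul_comm, ENNReal.rpow_mul, ENNReal.rpow_ofNat]

/-- The kernel `2 ^ (-ε|n|)` on `ℤ`, which measures the decay of the interaction of two dyadic
shells at distance `n`. -/
def dyadicKernel (ε : ℝ) (n : ℤ) : ℝ≥0∞ := 2 ^ (-(ε * |(n : ℝ)|))

variable {ε : ℝ}

lemma dyadicKernel_ne_zero (n : ℤ) : dyadicKernel ε n ≠ 0 := two_rpow_ne_zero _

lemma dyadicKernel_ne_top (n : ℤ) : dyadicKernel ε n ≠ ∞ := two_rpow_ne_top _

lemma tsum_dyadicKernel_ne_top (hε : 0 < ε) : ∑' n, dyadicKernel ε n ≠ ∞ := by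
  let r : ℝ≥0 := 2 ^ (-ε)
  have kernel_eq (n : ℤ) : dyadicKernel ε n = (r ^ n.natAbs : ℝ≥0) := by
    rw [← NNReal.rpow_natCast, ← NNReal.rpow_mul, ENNReal.coe_rpow_of_ne_zero two_ne_zero,
      ENNReal.coe_ofNat, Nat.cast_natAbs, Int.cast_abs, neg_mul, dyadicKernel]
  have summable_geometric : Summable fun n : ℕ ↦ (r : ℝ) ^ n :=
    summable_geometric_of_lt_one r.2
      (NNReal.rpow_lt_one_of_one_lt_of_neg one_lt_two (neg_lt_zero.2 hε))
  simp only [kernel_eq]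
  rw [ENNReal.tsum_coe_ne_top_iff_summable_coe]
  exact .of_nat_of_neg (by simpa using summable_geometric) (by simpa using summable_geometric)

lemma tsum_dyadicKernel_sub_left (m : ℤ) :
    ∑' j, dyadicKernel ε (m - j) = ∑' n, dyadicKernel ε n :=
  (Equiv.subLeft m).tsum_eq _

lemma tsum_dyadicKernel_sub_right (j : ℤ) :
    ∑' m, dyadicKernel ε (m - j) = ∑' n, dyadicKernel ε n :=
  (Equiv.subRight j).tsum_eq _

/-- The two largest frequencies are comparable, so the distance to the smallest one carries the
decay. -/
lemma dyadic_exponent_le {a b D : ℝ} (hε : 0 ≤ ε) (ha : ε ≤ D - a) (hb : ε ≤ D - b)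
    (hab : 2 * ε ≤ a + b) {m j k : ℤ} (hm : m ≤ max j k + 1) (hj : j ≤ max m k + 1)
    (hk : k ≤ max m j + 1) :
    m * (a + b - D) + (min m (min j k) : ℤ) * D - j * a - k * b
      ≤ |a| + |b| + ε - ε * |((m - j : ℤ) : ℝ)| - ε * |((m - k : ℤ) : ℝ)| := by
  have mul_le_abs {t c : ℝ} (ht : |t| ≤ 1) : t * c ≤ |c| := by
    calc t * c ≤ |t| * |c| := (le_abs_self _).trans_eq (abs_mul t c)
      _ ≤ |c| := mul_le_of_le_one_left (abs_nonneg c) ht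
  push_cast
  obtain ⟨hmj, hmk⟩ | ⟨hjm, hjk⟩ | ⟨hkm, hkj⟩ :
      (m ≤ j ∧ m ≤ k) ∨ (j ≤ m ∧ j ≤ k) ∨ (k ≤ m ∧ k ≤ j) := by lia
  · have hjk : |(j - k : ℝ)| ≤ 1 := by exact_mod_cast abs_le.2 ⟨by lia, by lia⟩
    rify at hmj hmk
    rw [min_eq_left (le_min hmj hmk), abs_sub_comm, abs_of_nonneg (sub_nonneg.2 hmj),
      abs_sub_comm, abs_of_nonneg (sub_nonneg.2 hmk)]
    nlinarith [mul_le_abs (c := b) hjk, abs_nonneg a, abs_le.1 hjk]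
  · have hmk : |(m - k : ℝ)| ≤ 1 := by exact_mod_cast abs_le.2 ⟨by lia, by lia⟩
    rify at hjm hjk
    rw [min_eq_left hjk, min_eq_right hjm, abs_of_nonneg (sub_nonneg.2 hjm)]
    nlinarith [mul_le_abs (c := b) hmk, abs_nonneg a]
  · have hmj : |(m - j : ℝ)| ≤ 1 := by exact_mod_cast abs_le.2 ⟨by lia, by lia⟩
    rify at hkm hkj
    rw [min_eq_right hkj, min_eq_right hkm, abs_of_nonneg (sub_nonneg.2 hkm)]
    nlinarith [mul_le_abs (c := a) hmj, abs_nonneg b]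

end DyadicKernel

section DyadicShell

variable {E : Type*} [NormedAddCommGroup E]

/-- The dyadic shell `{x | 2 ^ m ≤ ‖x‖ < 2 ^ (m + 1)}`. -/
def dyadicShell (E : Type*) [NormedAddCommGroup E] (m : ℤ) : Set E :=
  norm ⁻¹' Set.Ico ((2 : ℝ) ^ m) (2 ^ (m + 1))

lemma pairwise_disjoint_dyadicShell : Pairwise (Function.onFun Disjoint (dyadicShell E)) := by
  have monotone_two_zpow : Monotone fun m : ℤ ↦ (2 : ℝ) ^ m := zpow_right_mono₀ one_le_two
  exact fun m j hmj ↦ (monotone_two_zpow.pairwise_disjoint_on_Ico_succ hmj).preimage norm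

lemma iUnion_dyadicShell : ⋃ m, dyadicShell E m = {0}ᶜ := by
  ext x
  simp only [Set.mem_iUnion, Set.mem_compl_singleton_iff]
  refine ⟨?_, fun hx ↦ exists_mem_Ico_zpow (norm_pos_iff.2 hx) one_lt_two⟩
  rintro ⟨m, hx, -⟩
  exact norm_pos_iff.1 ((zpow_pos two_pos m).trans_le hx)

lemma le_max_add_one_of_norm_le_add {x y z : E} {m j k : ℤ} (hx : x ∈ dyadicShell E m)
    (hy : y ∈ dyadicShell E j) (hz : z ∈ dyadicShell E k) (h : ‖x‖ ≤ ‖y‖ + ‖z‖) :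
    m ≤ max j k + 1 := by
  have norm_lt {w : E} {i : ℤ} (hw : w ∈ dyadicShell E i) (hi : i ≤ max j k) :
      ‖w‖ < 2 ^ (max j k + 1) :=
    hw.2.trans_le (zpow_le_zpow_right₀ one_le_two (by lia))
  have two_zpow_lt : (2 : ℝ) ^ m < 2 ^ (max j k + 2) := by
    calc (2 : ℝ) ^ m ≤ ‖y‖ + ‖z‖ := hx.1.trans h
      _ < 2 ^ (max j k + 1) + 2 ^ (max j k + 1) :=
        add_lt_add (norm_lt hy (le_max_left j k)) (norm_lt hz (le_max_right j k))
      _ = 2 ^ (max j k + 2) := by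
        rw [← two_mul, ← zpow_one_add₀ two_ne_zero]
        congr 1
        ring
  have := (zpow_lt_zpow_iff_right₀ one_lt_two).1 two_zpow_lt
  lia

variable [MeasurableSpace E] [BorelSpace E]

lemma measurableSet_dyadicShell (m : ℤ) : MeasurableSet (dyadicShell E m) :=
  measurable_norm measurableSet_Ico

lemma lintegral_eq_tsum_dyadicShell (μ : Measure E) [NullSingletonClass μ] (f : E → ℝ≥0∞) :
    ∫⁻ x, f x ∂μ = ∑' m, ∫⁻ x in dyadicShell E m, f x ∂μ := by
  rw [← lintegral_iUnion measurableSet_dyadicShell pairwise_disjoint_dyadicShell,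
    iUnion_dyadicShell, restrict_compl_singleton]

lemma measure_dyadicShell_le [NormedSpace ℝ E] [FiniteDimensional ℝ E] (μ : Measure E)
    [μ.IsAddHaarMeasure] (m : ℤ) :
    μ (dyadicShell E m) ≤ μ (Metric.ball 0 2) * 2 ^ (m * (Module.finrank ℝ E : ℝ)) := by
  have subset_ball : dyadicShell E m ⊆ Metric.ball 0 ((2 : ℝ) ^ m * 2) := fun x hx ↦ by
    rw [mem_ball_zero_iff, ← zpow_add_one₀ two_ne_zero]
    exact hx.2
  refine (measure_mono subset_ball).trans_eq ?_
  rw [Measure.addHaar_ball_mul_of_pos μ 0 (by positivity), mul_comm, ENNReal.rpow_mul,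
    ENNReal.rpow_natCast, ENNReal.ofReal_pow (by positivity), ← Real.rpow_intCast,
    ← ENNReal.ofReal_rpow_of_pos two_pos, ENNReal.ofReal_ofNat]

end DyadicShell

section ShellConvolution

variable {E : Type*} [NormedAddCommGroup E] [MeasurableSpace E]

/-- The squared, dyadically discretised `Ḣ^s` energy `2 ^ (2ms) ∫_{2 ^ m ≤ ‖x‖ < 2 ^ (m + 1)} f ^ 2`
of a nonnegative function on the frequency side. -/
def shellEnergy (μ : Measure E) (s : ℝ) (f : E → ℝ≥0∞) (m : ℤ) : ℝ≥0∞ :=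
  2 ^ (2 * (m * s)) * ∫⁻ x in dyadicShell E m, f x ^ 2 ∂μ

lemma setLIntegral_dyadicShell_sq (μ : Measure E) (s : ℝ) (f : E → ℝ≥0∞) (m : ℤ) :
    ∫⁻ x in dyadicShell E m, f x ^ 2 ∂μ = 2 ^ (2 * -(m * s)) * shellEnergy μ s f m := by
  rw [shellEnergy, ← mul_assoc, ← two_rpow_add, mul_neg, neg_add_cancel, ENNReal.rpow_zero, one_mul]

/-- The constant in the interaction estimate between dyadic shells: a ball of radius `2` bounds the
volume of the unit shell, and the power of `2` is the loss in `dyadic_exponent_le`. -/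
def shellConst (μ : Measure E) (a b ε : ℝ) : ℝ≥0∞ :=
  μ (Metric.ball 0 2) * 2 ^ (2 * (|a| + |b| + ε))

lemma shellConst_ne_top (μ : Measure E) [ProperSpace E] [IsFiniteMeasureOnCompacts μ]
    (a b ε : ℝ) : shellConst μ a b ε ≠ ∞ :=
  ENNReal.mul_ne_top measure_ball_lt_top.ne (two_rpow_ne_top _)

variable {μ : Measure E} {f g : E → ℝ≥0∞}

lemma shellEnergy_le_mul_tsum {ι : Type*} [Countable ι] {h : E → ℝ≥0∞} {c : ι → ℝ≥0∞}
    {F : ι → E → ℝ≥0∞} (hF : ∀ i, Measurable (F i)) {C : ℝ≥0∞} (hC : C ≠ ∞)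
    (hle : ∀ x, h x ^ 2 ≤ C * ∑' i, c i * F i x ^ 2) (s : ℝ) (m : ℤ) :
    shellEnergy μ s h m ≤ C * ∑' i, c i * shellEnergy μ s (F i) m := by
  have h_int : ∫⁻ x in dyadicShell E m, h x ^ 2 ∂μ
      ≤ C * ∑' i, c i * ∫⁻ x in dyadicShell E m, F i x ^ 2 ∂μ := by
    refine (lintegral_mono hle).trans_eq ?_
    rw [lintegral_const_mul' _ _ hC, lintegral_tsum fun i ↦ by fun_prop]
    congr with i
    rw [lintegral_const_mul _ (by fun_prop)]
  grw [shellEnergy, h_int, mul_left_comm, ← ENNReal.tsum_mul_left]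
  simp only [shellEnergy, mul_left_comm, le_refl]

variable [BorelSpace E]

lemma lconvolution_eq_tsum_dyadicShell [MeasurableAdd₂ E] [NullSingletonClass μ]
    [μ.IsAddLeftInvariant] [μ.IsNegInvariant] (f g : E → ℝ≥0∞) (x : E) :
    (f ⋆ₗ[μ] g) x = ∑' p : ℤ × ℤ,
      ((dyadicShell E p.1).indicator f ⋆ₗ[μ] (dyadicShell E p.2).indicator g) x := by
  have eq_tsum_left (f g : E → ℝ≥0∞) (x : E) :
      (f ⋆ₗ[μ] g) x = ∑' j, ((dyadicShell E j).indicator f ⋆ₗ[μ] g) x := by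
    rw [lconvolution_def, lintegral_eq_tsum_dyadicShell]
    refine tsum_congr fun j ↦ ?_
    rw [lconvolution_def, ← lintegral_indicator (measurableSet_dyadicShell j)]
    simp only [Set.indicator_mul_left]
  have eq_tsum_right (f g : E → ℝ≥0∞) (x : E) :
      (f ⋆ₗ[μ] g) x = ∑' k, (f ⋆ₗ[μ] (dyadicShell E k).indicator g) x := by
    rw [lconvolution_comm, eq_tsum_left]
    exact tsum_congr fun k ↦ by rw [lconvolution_comm]
  calc (f ⋆ₗ[μ] g) x = ∑' j, ((dyadicShell E j).indicator f ⋆ₗ[μ] g) x := eq_tsum_left f g x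
    _ = ∑' j, ∑' k, ((dyadicShell E j).indicator f ⋆ₗ[μ] (dyadicShell E k).indicator g) x :=
      tsum_congr fun j ↦ eq_tsum_right _ g x
    _ = _ := ENNReal.tsum_prod.symm

lemma tsum_dyadicKernel_mul_dyadicKernel (ε : ℝ) (m : ℤ) :
    ∑' p : ℤ × ℤ, dyadicKernel ε (m - p.1) * dyadicKernel ε (m - p.2)
      = (∑' n, dyadicKernel ε n) ^ 2 := by
  rw [ENNReal.tsum_prod (f := fun j k ↦ dyadicKernel ε (m - j) * dyadicKernel ε (m - k))]
  simp only [ENNReal.tsum_mul_left, ENNReal.tsum_mul_right, tsum_dyadicKernel_sub_left, sq]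

lemma sq_lconvolution_le_tsum_dyadicShell [MeasurableAdd₂ E] [NullSingletonClass μ]
    [μ.IsAddLeftInvariant] [μ.IsNegInvariant] (ε : ℝ) (f g : E → ℝ≥0∞) (m : ℤ) (x : E) :
    (f ⋆ₗ[μ] g) x ^ 2 ≤ (∑' n, dyadicKernel ε n) ^ 2 *
      ∑' p : ℤ × ℤ, (dyadicKernel ε (m - p.1) * dyadicKernel ε (m - p.2))⁻¹ *
        ((dyadicShell E p.1).indicator f ⋆ₗ[μ] (dyadicShell E p.2).indicator g) x ^ 2 := by
  rw [lconvolution_eq_tsum_dyadicShell, ← tsum_dyadicKernel_mul_dyadicKernel ε m]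
  exact sq_tsum_le_tsum_mul_tsum_inv_mul_sq
    (fun _ ↦ mul_ne_zero (dyadicKernel_ne_zero _) (dyadicKernel_ne_zero _))
    (fun _ ↦ ENNReal.mul_ne_top (dyadicKernel_ne_top _) (dyadicKernel_ne_top _)) _

lemma setLIntegral_sq_lconvolution_dyadicShell_eq_zero {m j k : ℤ}
    (h : ¬ (m ≤ max j k + 1 ∧ j ≤ max m k + 1 ∧ k ≤ max m j + 1)) :
    ∫⁻ x in dyadicShell E m,
      ((dyadicShell E j).indicator f ⋆ₗ[μ] (dyadicShell E k).indicator g) x ^ 2 ∂μ = 0 := by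
  rw [← lintegral_zero]
  refine setLIntegral_congr_fun (measurableSet_dyadicShell m) fun x hx ↦ ?_
  rw [sq_eq_zero_iff, lconvolution_def, ← lintegral_zero]
  congr with y
  by_contra hne
  obtain ⟨hfy, hgy⟩ := mul_ne_zero_iff.1 hne
  have hy := Set.mem_of_indicator_ne_zero hfy
  have hxy := Set.mem_of_indicator_ne_zero hgy
  refine h ⟨le_max_add_one_of_norm_le_add hx hy hxy ?_,
    le_max_add_one_of_norm_le_add hy hx hxy ?_, le_max_add_one_of_norm_le_add hxy hx hy ?_⟩
  · simpa using norm_add_le y (-y + x)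
  · simpa using norm_sub_le x (-y + x)
  · simpa only [neg_add_eq_sub] using norm_sub_le x y

variable [NormedSpace ℝ E] [FiniteDimensional ℝ E] [μ.IsAddHaarMeasure] {a b ε : ℝ}

lemma min_measure_dyadicShell_le (μ : Measure E) [μ.IsAddHaarMeasure] (m j k : ℤ) :
    min (μ (dyadicShell E m)) (min (μ (dyadicShell E j)) (μ (dyadicShell E k)))
      ≤ μ (Metric.ball 0 2) * 2 ^ ((min m (min j k) : ℤ) * (Module.finrank ℝ E : ℝ)) := by
  rcases min_choice m (min j k) with h | h <;> rw [h]
  · exact (min_le_left _ _).trans (measure_dyadicShell_le μ m)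
  rcases min_choice j k with h | h <;> rw [h]
  · exact (min_le_right _ _).trans ((min_le_left _ _).trans (measure_dyadicShell_le μ j))
  · exact (min_le_right _ _).trans ((min_le_right _ _).trans (measure_dyadicShell_le μ k))

lemma shellEnergy_indicator_lconvolution_le_min (hf : Measurable f) (hg : Measurable g)
    (s a b : ℝ) (m j k : ℤ) :
    shellEnergy μ s ((dyadicShell E j).indicator f ⋆ₗ[μ] (dyadicShell E k).indicator g) m
      ≤ μ (Metric.ball 0 2) *
        2 ^ (2 * (m * s + (min m (min j k) : ℤ) * ((Module.finrank ℝ E : ℝ) / 2) - j * a - k * b)) *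
          (shellEnergy μ a f j * shellEnergy μ b g k) := by
  grw [shellEnergy, setLIntegral_sq_indicator_lconvolution_indicator_le hf hg
    (measurableSet_dyadicShell j) (measurableSet_dyadicShell k), min_measure_dyadicShell_le,
    setLIntegral_dyadicShell_sq μ a f, setLIntegral_dyadicShell_sq μ b g]
  set i : ℤ := min m (min j k)
  rw [show 2 * (m * s + i * ((Module.finrank ℝ E : ℝ) / 2) - j * a - k * b)
    = 2 * (m * s) + i * Module.finrank ℝ E + 2 * -(j * a) + 2 * -(k * b) by ring]
  simp only [two_rpow_add]
  refine le_of_eq ?_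
  ring

theorem shellEnergy_indicator_lconvolution_le (hf : Measurable f) (hg : Measurable g)
    (hε : 0 ≤ ε) (ha : ε ≤ (Module.finrank ℝ E : ℝ) / 2 - a)
    (hb : ε ≤ (Module.finrank ℝ E : ℝ) / 2 - b) (hab : 2 * ε ≤ a + b) (m j k : ℤ) :
    shellEnergy μ (a + b - (Module.finrank ℝ E : ℝ) / 2)
        ((dyadicShell E j).indicator f ⋆ₗ[μ] (dyadicShell E k).indicator g) m
      ≤ shellConst μ a b ε * (dyadicKernel ε (m - j) * dyadicKernel ε (m - k)) ^ 2 *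
        (shellEnergy μ a f j * shellEnergy μ b g k) := by
  by_cases h : m ≤ max j k + 1 ∧ j ≤ max m k + 1 ∧ k ≤ max m j + 1
  swap
  · rw [shellEnergy, setLIntegral_sq_lconvolution_dyadicShell_eq_zero h, mul_zero]
    exact zero_le
  refine (shellEnergy_indicator_lconvolution_le_min hf hg _ a b m j k).trans ?_
  grw [two_rpow_le_two_rpow (mul_le_mul_of_nonneg_left
    (dyadic_exponent_le hε ha hb hab h.1 h.2.1 h.2.2) zero_le_two)]
  simp only [shellConst, dyadicKernel, ← two_rpow_add, ← two_rpow_two_mul, mul_assoc]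
  refine le_of_eq ?_
  congr 3
  ring

lemma shellEnergy_lconvolution_le (hf : Measurable f) (hg : Measurable g)
    (hε : 0 < ε) (ha : ε ≤ (Module.finrank ℝ E : ℝ) / 2 - a)
    (hb : ε ≤ (Module.finrank ℝ E : ℝ) / 2 - b) (hab : 2 * ε ≤ a + b)
    {B : ℝ≥0∞} (hB : ∀ k, shellEnergy μ b g k ≤ B) (m : ℤ) :
    shellEnergy μ (a + b - (Module.finrank ℝ E : ℝ) / 2) (f ⋆ₗ[μ] g) m
      ≤ (∑' n, dyadicKernel ε n) ^ 3 * shellConst μ a b ε * B *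
        ∑' j, dyadicKernel ε (m - j) * shellEnergy μ a f j := by
  have : Nontrivial E := by
    have finrank_pos : (0 : ℝ) < Module.finrank ℝ E := by linarith
    exact Module.nontrivial_of_finrank_pos (R := ℝ) (by exact_mod_cast finrank_pos)
  set D : ℝ := (Module.finrank ℝ E : ℝ) / 2
  let w (p : ℤ × ℤ) := dyadicKernel ε (m - p.1) * dyadicKernel ε (m - p.2)
  let F (p : ℤ × ℤ) := (dyadicShell E p.1).indicator f ⋆ₗ[μ] (dyadicShell E p.2).indicator g
  have w_ne_zero (p) : w p ≠ 0 := mul_ne_zero (dyadicKernel_ne_zero _) (dyadicKernel_ne_zero _)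
  have w_ne_top (p) : w p ≠ ∞ := ENNReal.mul_ne_top (dyadicKernel_ne_top _) (dyadicKernel_ne_top _)
  have block_le (p : ℤ × ℤ) : (w p)⁻¹ * shellEnergy μ (a + b - D) (F p) m
      ≤ shellConst μ a b ε * (w p * (shellEnergy μ a f p.1 * B)) := by
    grw [shellEnergy_indicator_lconvolution_le hf hg hε.le ha hb hab, hB p.2]
    refine le_of_eq ?_
    calc (w p)⁻¹ * (shellConst μ a b ε * w p ^ 2 * (shellEnergy μ a f p.1 * B))
        = shellConst μ a b ε * ((w p)⁻¹ * w p * w p * (shellEnergy μ a f p.1 * B)) := by ring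
      _ = _ := by rw [ENNReal.inv_mul_cancel (w_ne_zero p) (w_ne_top p), one_mul]
  calc shellEnergy μ (a + b - D) (f ⋆ₗ[μ] g) m
      ≤ (∑' n, dyadicKernel ε n) ^ 2 * ∑' p, (w p)⁻¹ * shellEnergy μ (a + b - D) (F p) m :=
        shellEnergy_le_mul_tsum
          (fun _ ↦ measurable_lconvolution μ (hf.indicator (measurableSet_dyadicShell _))
            (hg.indicator (measurableSet_dyadicShell _)))
          (ENNReal.pow_ne_top (tsum_dyadicKernel_ne_top hε))
          (sq_lconvolution_le_tsum_dyadicShell ε f g m) _ m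
    _ ≤ (∑' n, dyadicKernel ε n) ^ 2 *
          ∑' p : ℤ × ℤ, shellConst μ a b ε * (w p * (shellEnergy μ a f p.1 * B)) := by
        grw [ENNReal.tsum_le_tsum block_le]
    _ = (∑' n, dyadicKernel ε n) ^ 2 * (shellConst μ a b ε * ∑' j, ∑' k,
          dyadicKernel ε (m - j) * dyadicKernel ε (m - k) * (shellEnergy μ a f j * B)) := by
        rw [ENNReal.tsum_mul_left, ← ENNReal.tsum_prod]
    _ = (∑' n, dyadicKernel ε n) ^ 3 * shellConst μ a b ε * B *
          ∑' j, dyadicKernel ε (m - j) * shellEnergy μ a f j := by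
        simp only [ENNReal.tsum_mul_left, ENNReal.tsum_mul_right, tsum_dyadicKernel_sub_left]
        simp only [← mul_assoc, ENNReal.tsum_mul_right, mul_right_comm _ (∑' n, dyadicKernel ε n)]
        ring

theorem tsum_shellEnergy_lconvolution_le (hf : Measurable f) (hg : Measurable g)
    (hε : 0 < ε) (ha : ε ≤ (Module.finrank ℝ E : ℝ) / 2 - a)
    (hb : ε ≤ (Module.finrank ℝ E : ℝ) / 2 - b) (hab : 2 * ε ≤ a + b)
    {B : ℝ≥0∞} (hB : ∀ k, shellEnergy μ b g k ≤ B) :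
    ∑' m, shellEnergy μ (a + b - (Module.finrank ℝ E : ℝ) / 2) (f ⋆ₗ[μ] g) m
      ≤ (∑' n, dyadicKernel ε n) ^ 4 * shellConst μ a b ε * B * ∑' j, shellEnergy μ a f j := by
  set S := ∑' n, dyadicKernel ε n with hS
  calc ∑' m, shellEnergy μ (a + b - (Module.finrank ℝ E : ℝ) / 2) (f ⋆ₗ[μ] g) m
      ≤ ∑' m, S ^ 3 * shellConst μ a b ε * B *
          ∑' j, dyadicKernel ε (m - j) * shellEnergy μ a f j :=
        ENNReal.tsum_le_tsum fun m ↦ shellEnergy_lconvolution_le hf hg hε ha hb hab hB m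
    _ = S ^ 3 * shellConst μ a b ε * B *
          ∑' j, ∑' m, dyadicKernel ε (m - j) * shellEnergy μ a f j := by
        rw [ENNReal.tsum_mul_left, ENNReal.tsum_comm]
    _ = S ^ 4 * shellConst μ a b ε * B * ∑' j, shellEnergy μ a f j := by
        simp only [ENNReal.tsum_mul_right, ENNReal.tsum_mul_left, tsum_dyadicKernel_sub_right, ← hS]
        ring

end ShellConvolution

section WeightedNorm

variable {E : Type*} [NormedAddCommGroup E]

lemma enorm_norm_rpow_mem_Icc {x : E} {m : ℤ} (hx : x ∈ dyadicShell E m) (s : ℝ) :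
    ‖‖x‖ ^ s‖ₑ ∈ Set.Icc ((2 : ℝ≥0∞) ^ (m * s - |s|)) (2 ^ (m * s + |s|)) := by
  have norm_pos : 0 < ‖x‖ := (zpow_pos two_pos m).trans_le hx.1
  obtain ⟨t, ht⟩ : ∃ t : ℝ, 2 ^ t = ‖x‖ :=
    ⟨Real.logb 2 ‖x‖, Real.rpow_logb two_pos (by norm_num) norm_pos⟩
  have t_mem : (m : ℝ) ≤ t ∧ t ≤ (m + 1 : ℤ) := by
    have h := hx
    rw [dyadicShell, Set.mem_preimage, ← ht, ← Real.rpow_intCast, ← Real.rpow_intCast] at h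
    exact ⟨(Real.rpow_le_rpow_left_iff one_lt_two).1 h.1,
      (Real.rpow_le_rpow_left_iff one_lt_two).1 h.2.le⟩
  have abs_le_abs : |(t - m) * s| ≤ |s| := by
    rw [abs_mul]
    refine mul_le_of_le_one_left (abs_nonneg s) (abs_le.2 ?_)
    push_cast at t_mem
    constructor <;> linarith
  have enorm_eq : ‖‖x‖ ^ s‖ₑ = 2 ^ (m * s + (t - m) * s) := by
    rw [← ht, ← Real.rpow_mul two_pos.le, Real.enorm_of_nonneg (by positivity),
      ← ENNReal.ofReal_rpow_of_pos two_pos, ENNReal.ofReal_ofNat]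
    ring_nf
  rw [enorm_eq]
  exact ⟨two_rpow_le_two_rpow (by linarith [(abs_le.1 abs_le_abs).1]),
    two_rpow_le_two_rpow (by linarith [(abs_le.1 abs_le_abs).2])⟩

variable [MeasurableSpace E] [BorelSpace E] {μ : Measure E} [NullSingletonClass μ]

lemma lintegral_norm_rpow_mul_sq_le_tsum_shellEnergy (s : ℝ) (f : E → ℝ≥0∞) :
    ∫⁻ x, (‖‖x‖ ^ s‖ₑ * f x) ^ 2 ∂μ ≤ 2 ^ (2 * |s|) * ∑' m, shellEnergy μ s f m := by
  rw [lintegral_eq_tsum_dyadicShell, ← ENNReal.tsum_mul_left]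
  refine ENNReal.tsum_le_tsum fun m ↦ ?_
  rw [shellEnergy, ← mul_assoc, ← two_rpow_add, ← lintegral_const_mul' _ _ (two_rpow_ne_top _),
    ← mul_add, two_rpow_two_mul, add_comm]
  refine setLIntegral_mono' (measurableSet_dyadicShell m) fun x hx ↦ ?_
  grw [(enorm_norm_rpow_mem_Icc hx s).2, mul_pow]

lemma tsum_shellEnergy_le_lintegral_norm_rpow_mul_sq (s : ℝ) (f : E → ℝ≥0∞) :
    ∑' m, shellEnergy μ s f m ≤ 2 ^ (2 * |s|) * ∫⁻ x, (‖‖x‖ ^ s‖ₑ * f x) ^ 2 ∂μ := by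
  rw [lintegral_eq_tsum_dyadicShell, ← ENNReal.tsum_mul_left]
  refine ENNReal.tsum_le_tsum fun m ↦ ?_
  rw [shellEnergy, ← lintegral_const_mul' _ _ (two_rpow_ne_top _),
    ← lintegral_const_mul' _ _ (two_rpow_ne_top _)]
  refine setLIntegral_mono' (measurableSet_dyadicShell m) fun x hx ↦ ?_
  calc (2 : ℝ≥0∞) ^ (2 * (m * s)) * f x ^ 2
      = 2 ^ (2 * |s| + 2 * (m * s - |s|)) * f x ^ 2 := by ring_nf
    _ = 2 ^ (2 * |s|) * (2 ^ (m * s - |s|) * f x) ^ 2 := by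
      rw [two_rpow_add, two_rpow_two_mul (_ - _), mul_pow, mul_assoc]
    _ ≤ 2 ^ (2 * |s|) * (‖‖x‖ ^ s‖ₑ * f x) ^ 2 := by
      grw [(enorm_norm_rpow_mem_Icc hx s).1]

end WeightedNorm

section Fourier

variable {V F : Type*} [NormedAddCommGroup V] [InnerProductSpace ℝ V] [FiniteDimensional ℝ V]
  [MeasurableSpace V] [BorelSpace V]

lemma fourier_fourier_apply [NormedAddCommGroup F] [NormedSpace ℂ F] [CompleteSpace F]
    (f : 𝓢(V, F)) (x : V) : 𝓕 (𝓕 f) x = f (-x) := by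
  rw [← neg_neg x, SchwartzMap.fourier_coe, ← Real.fourierInv_eq_fourier_neg,
    ← SchwartzMap.fourierInv_coe, FourierTransform.fourierInv_fourier_eq, neg_neg]

lemma fourier_mul_eq_convolution (u v : 𝓢(V, ℂ)) :
    𝓕 (fun x ↦ u x * v x) = SchwartzMap.convolution (ContinuousLinearMap.mul ℂ ℂ) (𝓕 u) (𝓕 v) := by
  ext ξ
  change _ = 𝓕⁻ (SchwartzMap.pairing (ContinuousLinearMap.mul ℂ ℂ) (𝓕 (𝓕 u)) (𝓕 (𝓕 v))) ξ
  rw [SchwartzMap.fourierInv_coe, Real.fourierInv_eq_fourier_comp_neg]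
  simp only [SchwartzMap.pairing_apply_apply, fourier_fourier_apply, neg_neg,
    ContinuousLinearMap.mul_apply']

lemma enorm_fourier_mul_le_lconvolution (u v : 𝓢(V, ℂ)) (ξ : V) :
    ‖𝓕 (fun x ↦ u x * v x) ξ‖ₑ ≤ ((‖𝓕 ⇑u ·‖ₑ) ⋆ₗ (‖𝓕 ⇑v ·‖ₑ)) ξ := by
  rw [fourier_mul_eq_convolution, SchwartzMap.convolution_apply]
  refine (enorm_integral_le_lintegral_enorm _).trans_eq ?_
  simp only [lconvolution_def, ContinuousLinearMap.mul_apply', enorm_mul, SchwartzMap.fourier_coe,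
    neg_add_eq_sub]

lemma measurable_enorm_fourier [NormedAddCommGroup F] [NormedSpace ℂ F] (f : 𝓢(V, F)) :
    Measurable fun ξ ↦ ‖𝓕 ⇑f ξ‖ₑ := by
  rw [← SchwartzMap.fourier_coe]
  exact (𝓕 f).continuous.enorm.measurable

lemma eLpNorm_fourierInv_two [NormedAddCommGroup F] [InnerProductSpace ℂ F] [CompleteSpace F]
    (f : 𝓢(V, F)) : eLpNorm (𝓕⁻ ⇑f) 2 volume = eLpNorm f 2 volume := by
  have plancherel := SchwartzMap.norm_fourier_toL2_eq (𝓕⁻ f)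
  rw [FourierTransform.fourier_fourierInv_eq, SchwartzMap.norm_toLp, SchwartzMap.norm_toLp,
    ENNReal.toReal_eq_toReal_iff' (f.memLp _ _).2.ne ((𝓕⁻ f).memLp _ _).2.ne] at plancherel
  rw [plancherel, SchwartzMap.fourierInv_coe]

end Fourier

section LittlewoodPaley

variable (P : LPPair d) (v : 𝓢(Ed d, ℂ))

lemma norm_mem_Icc_of_phi_ne_zero {q : ℤ} {ξ : Ed d} (h : P.φ ((2 : ℝ) ^ (-q) • ξ) ≠ 0) :
    ‖ξ‖ ∈ Set.Icc ((2 : ℝ) ^ q * (3 / 4)) (2 ^ q * (8 / 3)) := by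
  have two_zpow_pos : (0 : ℝ) < 2 ^ q := zpow_pos two_pos q
  have norm_smul_mem := P.supp_φ h
  rwa [Set.mem_ofPred_eq, norm_smul, norm_zpow, Real.norm_ofNat, zpow_neg,
    inv_mul_le_iff₀ two_zpow_pos, le_inv_mul_iff₀ two_zpow_pos] at norm_smul_mem

lemma exists_schwartzMap_eq_phi_mul_fourier (q : ℤ) :
    ∃ w : 𝓢(Ed d, ℂ), ⇑w = fun ξ ↦ (P.φ ((2 : ℝ) ^ (-q) • ξ) : ℂ) * 𝓕 ⇑v ξ := by
  have contDiff_phi : ContDiff ℝ (⊤ : ℕ∞) fun ξ ↦ (P.φ ((2 : ℝ) ^ (-q) • ξ) : ℂ) :=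
    Complex.ofRealCLM.contDiff.comp (P.smooth_φ.comp (contDiff_const_smul _))
  have compact_support : HasCompactSupport fun ξ ↦ (P.φ ((2 : ℝ) ^ (-q) • ξ) : ℂ) * 𝓕 ⇑v ξ := by
    refine .of_support_subset_isCompact (isCompact_closedBall 0 ((2 : ℝ) ^ q * (8 / 3)))
      fun ξ hξ ↦ mem_closedBall_zero_iff.2 ?_
    exact (norm_mem_Icc_of_phi_ne_zero P (Complex.ofReal_ne_zero.1 (left_ne_zero_of_mul hξ))).2
  exact ⟨compact_support.toSchwartzMap (contDiff_phi.mul ((𝓕 v).smooth _)), rfl⟩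

lemma eLpNorm_lpBlock_two (q : ℤ) :
    eLpNorm (lpBlock P q v) 2 volume
      = eLpNorm (fun ξ ↦ (P.φ ((2 : ℝ) ^ (-q) • ξ) : ℂ) * 𝓕 ⇑v ξ) 2 volume := by
  obtain ⟨w, hw⟩ := exists_schwartzMap_eq_phi_mul_fourier P v q
  rw [lpBlock, ← hw, eLpNorm_fourierInv_two]

lemma two_rpow_mul_eLpNorm_lpBlock_le_besovNorm (s : ℝ) (p : ℝ≥0∞) (u : Ed d → ℂ) (q : ℤ) :
    (2 : ℝ≥0∞) ^ (q * s) * eLpNorm (lpBlock P q u) p volume ≤ besovNorm P s p ∞ u := by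
  rw [besovNorm, ellNorm, if_pos rfl]
  exact le_iSup (fun q : ℤ ↦ (2 : ℝ≥0∞) ^ (q * s) * eLpNorm (lpBlock P q u) p volume) q

lemma sum_phi_eq_one_of_mem_dyadicShell {k : ℤ} {ξ : Ed d} (hξ : ξ ∈ dyadicShell (Ed d) k) :
    ∑ q ∈ Finset.Icc (k - 1) (k + 1), P.φ ((2 : ℝ) ^ (-q) • ξ) = 1 := by
  have norm_pos : 0 < ‖ξ‖ := (zpow_pos two_pos k).trans_le hξ.1
  rw [← P.sum_one' ξ (norm_pos_iff.1 norm_pos)]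
  refine (tsum_eq_sum fun q hq ↦ ?_).symm
  by_contra phi_ne_zero
  obtain ⟨le_norm, norm_le⟩ := norm_mem_Icc_of_phi_ne_zero P phi_ne_zero
  have q_lt : (2 : ℝ) ^ q < 2 ^ (k + 2) := by
    calc (2 : ℝ) ^ q < 2 * (2 ^ q * (3 / 4)) := by linarith [zpow_pos (two_pos : (0 : ℝ) < 2) q]
      _ < 2 * 2 ^ (k + 1) := by linarith [hξ.2]
      _ = 2 ^ (k + 2) := by rw [← zpow_one_add₀ two_ne_zero]; ring_nf
  have k_lt : (2 : ℝ) ^ k < 2 ^ (q + 2) := by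
    calc (2 : ℝ) ^ k ≤ 2 ^ q * (8 / 3) := hξ.1.trans norm_le
      _ < 2 ^ q * 2 ^ (2 : ℤ) := by gcongr; norm_num
      _ = 2 ^ (q + 2) := (zpow_add₀ two_ne_zero q 2).symm
  rw [zpow_lt_zpow_iff_right₀ one_lt_two] at q_lt k_lt
  exact hq (Finset.mem_Icc.2 ⟨by lia, by lia⟩)

lemma eLpNorm_fourier_dyadicShell_le_sum (k : ℤ) :
    eLpNorm (𝓕 ⇑v) 2 (volume.restrict (dyadicShell (Ed d) k))
      ≤ ∑ q ∈ Finset.Icc (k - 1) (k + 1), eLpNorm (lpBlock P q v) 2 volume := by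
  let block (q : ℤ) (ξ : Ed d) : ℂ := (P.φ ((2 : ℝ) ^ (-q) • ξ) : ℂ) * 𝓕 ⇑v ξ
  have block_meas (q : ℤ) : AEStronglyMeasurable (block q) := by
    obtain ⟨w, hw⟩ := exists_schwartzMap_eq_phi_mul_fourier P v q
    exact (hw ▸ w.continuous).aestronglyMeasurable
  have fourier_eq_sum : 𝓕 ⇑v =ᵐ[volume.restrict (dyadicShell (Ed d) k)]
      ∑ q ∈ Finset.Icc (k - 1) (k + 1), block q := by
    filter_upwards [ae_restrict_mem (measurableSet_dyadicShell k)] with ξ hξ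
    rw [Finset.sum_apply, ← Finset.sum_mul, ← Complex.ofReal_sum,
      sum_phi_eq_one_of_mem_dyadicShell P hξ, Complex.ofReal_one, one_mul]
  calc eLpNorm (𝓕 ⇑v) 2 (volume.restrict (dyadicShell (Ed d) k))
      = eLpNorm (∑ q ∈ Finset.Icc (k - 1) (k + 1), block q) 2
          (volume.restrict (dyadicShell (Ed d) k)) := eLpNorm_congr_ae fourier_eq_sum
    _ ≤ ∑ q ∈ Finset.Icc (k - 1) (k + 1),
          eLpNorm (block q) 2 (volume.restrict (dyadicShell (Ed d) k)) :=
        eLpNorm_sum_le (fun q _ ↦ (block_meas q).restrict) one_le_two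
    _ ≤ ∑ q ∈ Finset.Icc (k - 1) (k + 1), eLpNorm (lpBlock P q v) 2 volume := by
        gcongr with q
        rw [eLpNorm_lpBlock_two]
        exact eLpNorm_restrict_le _ _ _ _

lemma shellEnergy_fourier_le_besovNorm_sq (s : ℝ) (k : ℤ) :
    shellEnergy volume s (‖𝓕 ⇑v ·‖ₑ) k ≤ (3 * 2 ^ |s| * besovNorm P s 2 ∞ v) ^ 2 := by
  have block_le (q : ℤ) (hq : q ∈ Finset.Icc (k - 1) (k + 1)) :
      2 ^ (k * s) * eLpNorm (lpBlock P q v) 2 volume ≤ 2 ^ |s| * besovNorm P s 2 ∞ v := by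
    have abs_le_one : |((k - q : ℤ) : ℝ)| ≤ 1 := by
      rw [Finset.mem_Icc] at hq
      exact_mod_cast abs_le.2 ⟨by lia, by lia⟩
    have exponent_le : k * s ≤ |s| + q * s := by
      have h := (le_abs_self _).trans_eq (abs_mul ((k - q : ℤ) : ℝ) s)
      push_cast at h abs_le_one
      nlinarith [abs_nonneg s]
    grw [two_rpow_le_two_rpow exponent_le, two_rpow_add, mul_assoc,
      two_rpow_mul_eLpNorm_lpBlock_le_besovNorm]
  rw [shellEnergy, two_rpow_two_mul, ← sq_eLpNorm_two, ← mul_pow]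
  refine pow_le_pow_left' ?_ 2
  calc 2 ^ (k * s) * eLpNorm (𝓕 ⇑v) 2 (volume.restrict (dyadicShell (Ed d) k))
      ≤ ∑ q ∈ Finset.Icc (k - 1) (k + 1), 2 ^ (k * s) * eLpNorm (lpBlock P q v) 2 volume := by
        grw [eLpNorm_fourier_dyadicShell_le_sum P v k, Finset.mul_sum]
    _ ≤ (Finset.Icc (k - 1) (k + 1)).card • (2 ^ |s| * besovNorm P s 2 ∞ v) :=
        Finset.sum_le_card_nsmul _ _ _ block_le
    _ = 3 * 2 ^ |s| * besovNorm P s 2 ∞ v := by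
        rw [Int.card_Icc, show (k + 1 + 1 - (k - 1)).toNat = 3 by lia, nsmul_eq_mul, mul_assoc,
          Nat.cast_ofNat]

lemma sq_sobNorm (s : ℝ) (u : Ed d → ℂ) :
    sobNorm s u ^ 2 = ∫⁻ ξ, (‖‖ξ‖ ^ s‖ₑ * ‖𝓕 u ξ‖ₑ) ^ 2 := by
  simp only [sobNorm, sq_eLpNorm_two, enorm_mul, enorm_norm]

end LittlewoodPaley

lemma exists_pos_le_coe_sq {K : ℝ≥0∞} (hK : K ≠ ∞) : ∃ C : ℝ≥0, 0 < C ∧ K ≤ (C : ℝ≥0∞) ^ 2 := by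
  lift K to ℝ≥0 using hK
  refine ⟨K + 1, by positivity, ?_⟩
  have le_sq : K ≤ (K + 1) ^ 2 := le_self_add.trans (le_self_pow₀ le_add_self two_ne_zero)
  exact_mod_cast le_sq

lemma sq_sobNorm_mul_le (P : LPPair d) {a b ε : ℝ} (hε : 0 < ε) (ha : ε ≤ (d : ℝ) / 2 - a)
    (hb : ε ≤ (d : ℝ) / 2 - b) (hab : 2 * ε ≤ a + b) (u v : 𝓢(Ed d, ℂ)) :
    sobNorm (a + b - (d : ℝ) / 2) (fun x ↦ u x * v x) ^ 2
      ≤ 2 ^ (2 * |a + b - (d : ℝ) / 2|) * ((∑' n, dyadicKernel ε n) ^ 4 *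
          shellConst (volume : Measure (Ed d)) a b ε) * (3 * 2 ^ |b|) ^ 2 * 2 ^ (2 * |a|) *
        (sobNorm a u * besovNorm P b 2 ∞ v) ^ 2 := by
  have d_pos : (0 : ℝ) < d := by linarith
  have : Nonempty (Fin d) := Fin.pos_iff_nonempty.1 (by exact_mod_cast d_pos)
  have finrank_eq : (Module.finrank ℝ (Ed d) : ℝ) = d := by rw [finrank_euclideanSpace_fin]
  set σ : ℝ := a + b - (d : ℝ) / 2
  set K : ℝ≥0∞ := (∑' n, dyadicKernel ε n) ^ 4 * shellConst (volume : Measure (Ed d)) a b ε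
  set B : ℝ≥0∞ := besovNorm P b 2 ∞ v
  have convolution_le : ∑' m, shellEnergy volume σ ((‖𝓕 ⇑u ·‖ₑ) ⋆ₗ (‖𝓕 ⇑v ·‖ₑ)) m
      ≤ K * (3 * 2 ^ |b| * B) ^ 2 * ∑' j, shellEnergy volume a (‖𝓕 ⇑u ·‖ₑ) j := by
    have h := tsum_shellEnergy_lconvolution_le (μ := volume) (measurable_enorm_fourier u)
      (measurable_enorm_fourier v) hε (by rwa [finrank_eq]) (by rwa [finrank_eq]) hab
      (shellEnergy_fourier_le_besovNorm_sq P v b)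
    rwa [finrank_eq] at h
  calc sobNorm σ (fun x ↦ u x * v x) ^ 2
      ≤ ∫⁻ ξ, (‖‖ξ‖ ^ σ‖ₑ * ((‖𝓕 ⇑u ·‖ₑ) ⋆ₗ (‖𝓕 ⇑v ·‖ₑ)) ξ) ^ 2 := by
        rw [sq_sobNorm]
        gcongr with ξ
        exact enorm_fourier_mul_le_lconvolution u v ξ
    _ ≤ 2 ^ (2 * |σ|) * ∑' m, shellEnergy volume σ ((‖𝓕 ⇑u ·‖ₑ) ⋆ₗ (‖𝓕 ⇑v ·‖ₑ)) m :=
        lintegral_norm_rpow_mul_sq_le_tsum_shellEnergy σ _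
    _ ≤ 2 ^ (2 * |σ|) * (K * (3 * 2 ^ |b| * B) ^ 2 * (2 ^ (2 * |a|) * sobNorm a u ^ 2)) := by
        grw [convolution_le, tsum_shellEnergy_le_lintegral_norm_rpow_mul_sq, ← sq_sobNorm]
    _ = 2 ^ (2 * |σ|) * K * (3 * 2 ^ |b|) ^ 2 * 2 ^ (2 * |a|) * (sobNorm a u * B) ^ 2 := by
        ring

theorem stmt9_general (P : LPPair d) {a b : ℝ} (ha : a < (d : ℝ) / 2) (hb : b < (d : ℝ) / 2)
    (hab : 0 < a + b) :
    ∃ C : ℝ≥0, 0 < C ∧ ∀ u v : 𝓢(Ed d, ℂ),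
      sobNorm (a + b - (d : ℝ) / 2) (fun x ↦ u x * v x)
        ≤ C * sobNorm a u * besovNorm P b 2 ∞ v := by
  obtain ⟨ε, hε, hε_le⟩ : ∃ ε, 0 < ε ∧ ε ≤ min (d / 2 - a) (min (d / 2 - b) ((a + b) / 2)) :=
    ⟨_, lt_min (sub_pos.2 ha) (lt_min (sub_pos.2 hb) (half_pos hab)), le_rfl⟩
  simp only [le_min_iff, le_div_iff₀' (two_pos : (0 : ℝ) < 2)] at hε_le
  obtain ⟨ha, hb, hab⟩ := hε_le
  obtain ⟨C, hC, le_C_sq⟩ := exists_pos_le_coe_sq (K := 2 ^ (2 * |a + b - (d : ℝ) / 2|) *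
    ((∑' n, dyadicKernel ε n) ^ 4 * shellConst (volume : Measure (Ed d)) a b ε) *
      (3 * 2 ^ |b|) ^ 2 * 2 ^ (2 * |a|)) (by
    finiteness [tsum_dyadicKernel_ne_top hε, shellConst_ne_top (volume : Measure (Ed d)) a b ε])
  refine ⟨C, hC, fun u v ↦ (ENNReal.pow_le_pow_left_iff two_ne_zero).1 ?_⟩
  grw [sq_sobNorm_mul_le P hε ha hb hab u v, le_C_sq, ← mul_pow, mul_assoc]

/-- for `s ∈ (−d/2, d/2 − 1)`,
`‖uv‖_{Ḣ^s} ≤ C‖u‖_{Ḣ^{s+1}}‖v‖_{Ḃ^{d/2−1}_{2,∞}}`. -/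
theorem stmt9 {d : ℕ} (hd : 1 ≤ d) (P : LPPair d) (s : ℝ)
    (hs1 : -((d : ℝ)/2) < s) (hs2 : s < (d : ℝ)/2 - 1) :
    ∃ C : ℝ≥0, 0 < C ∧ ∀ u v : 𝓢(Ed d, ℂ),
      sobNorm s (fun x => u x * v x)
        ≤ C * sobNorm (s + 1) ⇑u * besovNorm P ((d : ℝ)/2 - 1) 2 ∞ ⇑v := by
  have general := stmt9_general P (a := s + 1) (b := (d : ℝ) / 2 - 1) (by linarith) (by linarith)
    (by linarith)
  rwa [show s + 1 + ((d : ℝ) / 2 - 1) - (d : ℝ) / 2 = s by ring] at general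
end
end

section
/- There exists a constant C > 0, depending only on d and the Littlewood–Paley functions, such that for all Schwartz functions u and v on ℝ^d, ‖uv‖_{Ḃ^{d/2}_{2,1}} ≤ C ‖u‖_{Ḃ^{d/2}_{2,1}} ‖v‖_{Ḃ^{d/2}_{2,1}}. -/
open MeasureTheory SchwartzMap Real Complex
open scoped FourierTransform ENNReal NNReal

noncomputable section

variable {d : ℕ}

/-! On the Fourier side the Besov norms based on `L²` see only `|𝓕u|` (Plancherel), and
`|𝓕(uv)| ≤ |𝓕u| ∗ |𝓕v|`. At a frequency of size about `2^q`, one of the two factors of this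
convolution is evaluated at a frequency `≳ 2^q`, so Young's inequality `L¹ ∗ L² ⊆ L²` bounds the
block `Δ̇_q(uv)` by `‖𝓕u‖_{L¹}` times the `L²` norm of the high frequencies of `𝓕v`, plus the
symmetric term. Cauchy–Schwarz on each dyadic shell gives `‖𝓕u‖_{L¹} ≲ ‖u‖_{Ḃ^{d/2}_{2,1}}`. The
high frequencies are covered by the blocks `Δ̇_{q-k}` with `k ≤ 2`, and for `s > 0` the weights
`2^{ks}` are summable over `k ≤ 2`, so Young's inequality on `ℤ` recovers the `Ḃ^s_{2,r}` norm. -/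

section Lp

variable {α : Type*} [MeasurableSpace α] {μ : Measure α}

lemma eLpNorm_iSup_of_directed {ι : Type*} [Countable ι] {f : ι → α → ℝ≥0∞}
    (hf : ∀ i, AEMeasurable (f i) μ) (hdir : Directed (· ≤ ·) f) (p : ℝ≥0∞) :
    eLpNorm (fun x => ⨆ i, f i x) p μ = ⨆ i, eLpNorm (f i) p μ := by
  rcases eq_or_ne p 0 with rfl | hp₀
  · simp
  rcases eq_or_ne p ∞ with rfl | hp_top
  · refine le_antisymm (eLpNormEssSup_le_of_ae_enorm_bound ?_)
      (iSup_le fun i => eLpNorm_mono_enorm fun x => le_iSup (f · x) i)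
    filter_upwards [ae_all_iff.2 fun i => enorm_ae_le_eLpNormEssSup (f i) μ] with x hx
    exact iSup_mono hx
  · have hp : 0 < p.toReal := ENNReal.toReal_pos hp₀ hp_top
    have hpow (a : ι → ℝ≥0∞) {z : ℝ} (hz : 0 < z) : (⨆ i, a i) ^ z = ⨆ i, a i ^ z :=
      (ENNReal.orderIsoRpow z hz).map_iSup a
    have hdir' : Directed (· ≤ ·) fun i x => f i x ^ p.toReal :=
      fun i j => (hdir i j).imp fun k hk => ⟨fun x => ENNReal.rpow_le_rpow (hk.1 x) hp.le,
        fun x => ENNReal.rpow_le_rpow (hk.2 x) hp.le⟩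
    simp only [eLpNorm_eq_lintegral_rpow_enorm_toReal hp₀ hp_top, enorm_eq_self, hpow _ hp]
    rw [lintegral_iSup_directed (fun i => (hf i).pow_const _) hdir', hpow _ (by positivity)]

lemma eLpNorm_tsum_le {ι : Type*} [Countable ι] {f : ι → α → ℝ≥0∞}
    (hf : ∀ i, AEMeasurable (f i) μ) {p : ℝ≥0∞} (hp : 1 ≤ p) :
    eLpNorm (fun x => ∑' i, f i x) p μ ≤ ∑' i, eLpNorm (f i) p μ := by
  have hdir : Directed (· ≤ ·) fun (s : Finset ι) x => ∑ i ∈ s, f i x :=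
    directed_of_isDirected_le fun s t hst x => Finset.sum_le_sum_of_subset hst
  simp only [ENNReal.tsum_eq_iSup_sum]
  rw [eLpNorm_iSup_of_directed (fun s => by fun_prop) hdir]
  refine iSup_mono fun s => ?_
  simpa only [← Finset.sum_apply] using
    eLpNorm_sum_le (fun i _ => (hf i).aestronglyMeasurable) hp

lemma lintegral_mul_rpow_le {f g : α → ℝ≥0∞} (hf : AEMeasurable f μ) (hg : AEMeasurable g μ)
    {p : ℝ} (hp : 1 ≤ p) :
    (∫⁻ x, f x * g x ∂μ) ^ p ≤ (∫⁻ x, f x ∂μ) ^ (p - 1) * ∫⁻ x, f x * g x ^ p ∂μ := by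
  have hp₀ : 0 < p := by positivity
  have hinv : 0 ≤ 1 - p⁻¹ := sub_nonneg.2 (inv_le_one_of_one_le₀ hp)
  have hsplit (x : α) : f x * g x = f x ^ (1 - p⁻¹) * (f x * g x ^ p) ^ p⁻¹ := by
    rw [ENNReal.mul_rpow_of_nonneg _ _ (by positivity), ← mul_assoc,
      ← ENNReal.rpow_add_of_nonneg _ _ hinv (by positivity), ENNReal.rpow_rpow_inv hp₀.ne',
      sub_add_cancel, ENNReal.rpow_one]
  calc (∫⁻ x, f x * g x ∂μ) ^ p
      ≤ ((∫⁻ x, f x ∂μ) ^ (1 - p⁻¹) * (∫⁻ x, f x * g x ^ p ∂μ) ^ p⁻¹) ^ p := by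
        simp only [hsplit]
        gcongr
        exact ENNReal.lintegral_mul_norm_pow_le hf (by fun_prop) hinv (by positivity) (by ring)
    _ = (∫⁻ x, f x ∂μ) ^ (p - 1) * ∫⁻ x, f x * g x ^ p ∂μ := by
        rw [ENNReal.mul_rpow_of_nonneg _ _ hp₀.le, ENNReal.rpow_inv_rpow hp₀.ne',
          ← ENNReal.rpow_mul, sub_mul, one_mul, inv_mul_cancel₀ hp₀.ne']

variable {G : Type*} [AddCommGroup G] [MeasurableSpace G] [MeasurableAdd₂ G] [MeasurableNeg G]
  {ν : Measure G} [ν.IsAddLeftInvariant] [SFinite ν]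

lemma lintegral_lconvolution {f g : G → ℝ≥0∞} (hf : AEMeasurable f ν) (hg : AEMeasurable g ν) :
    ∫⁻ x, (f ⋆ₗ[ν] g) x ∂ν = (∫⁻ x, f x ∂ν) * ∫⁻ x, g x ∂ν := by
  simp only [lconvolution_def]
  rw [lintegral_lintegral_swap (by fun_prop), ← lintegral_mul_const'' _ hf]
  refine lintegral_congr fun y => ?_
  rw [lintegral_const_mul'' _ (by fun_prop), lintegral_add_left_eq_self]

lemma lintegral_lconvolution_rpow_le {f g : G → ℝ≥0∞} (hf : AEMeasurable f ν)
    (hg : AEMeasurable g ν) {p : ℝ} (hp : 1 ≤ p) :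
    ∫⁻ x, (f ⋆ₗ[ν] g) x ^ p ∂ν ≤ (∫⁻ x, f x ∂ν) ^ p * ∫⁻ x, g x ^ p ∂ν :=
  calc ∫⁻ x, (f ⋆ₗ[ν] g) x ^ p ∂ν
      ≤ ∫⁻ x, (∫⁻ y, f y ∂ν) ^ (p - 1) * (f ⋆ₗ[ν] fun y => g y ^ p) x ∂ν :=
        lintegral_mono fun x => lintegral_mul_rpow_le hf (by fun_prop) hp
    _ = (∫⁻ x, f x ∂ν) ^ (p - 1) * (∫⁻ x, f x ∂ν) * ∫⁻ x, g x ^ p ∂ν := by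
        rw [lintegral_const_mul'' _ (by fun_prop), lintegral_lconvolution hf (hg.pow_const _),
          mul_assoc]
    _ = (∫⁻ x, f x ∂ν) ^ p * ∫⁻ x, g x ^ p ∂ν := by
        conv_rhs => rw [← sub_add_cancel p 1, ENNReal.rpow_add_of_nonneg _ _
          (sub_nonneg.2 hp) zero_le_one, ENNReal.rpow_one, sub_add_cancel]

lemma eLpNorm_lconvolution_le [ν.IsNegInvariant] {f g : G → ℝ≥0∞} (hf : AEMeasurable f ν)
    (hg : AEMeasurable g ν) {p : ℝ≥0∞} (hp : 1 ≤ p) :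
    eLpNorm (f ⋆ₗ[ν] g) p ν ≤ (∫⁻ x, f x ∂ν) * eLpNorm g p ν := by
  rcases eq_or_ne p ∞ with rfl | hp_top
  · refine eLpNormEssSup_le_of_ae_enorm_bound (.of_forall fun x => ?_)
    calc (f ⋆ₗ[ν] g) x = (g ⋆ₗ[ν] f) x := by rw [lconvolution_comm]
      _ ≤ ∫⁻ y, eLpNorm g ∞ ν * f (-y + x) ∂ν := lintegral_mono_ae <| by
          filter_upwards [enorm_ae_le_eLpNormEssSup g ν] with y hy
          gcongr
          exact hy
      _ = (∫⁻ y, f y ∂ν) * eLpNorm g ∞ ν := by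
          rw [lintegral_const_mul'' _ (by fun_prop), mul_comm]
          congr 1
          simpa only [sub_eq_neg_add] using lintegral_sub_left_eq_self f x
  · have hp' : 1 ≤ p.toReal := by simpa using ENNReal.toReal_mono hp_top hp
    have hp₀ : 0 < p.toReal := by positivity
    have hp_ne : p ≠ 0 := (zero_lt_one.trans_le hp).ne'
    simp only [eLpNorm_eq_lintegral_rpow_enorm_toReal hp_ne hp_top, enorm_eq_self]
    calc (∫⁻ x, (f ⋆ₗ[ν] g) x ^ p.toReal ∂ν) ^ (1 / p.toReal)
        ≤ ((∫⁻ x, f x ∂ν) ^ p.toReal * ∫⁻ x, g x ^ p.toReal ∂ν) ^ (1 / p.toReal) := by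
          gcongr
          exact lintegral_lconvolution_rpow_le hf hg hp'
      _ = _ := by
          rw [ENNReal.mul_rpow_of_nonneg _ _ (by positivity), ← ENNReal.rpow_mul,
            mul_one_div_cancel hp₀.ne', ENNReal.rpow_one]

end Lp

section Fourier

variable {V : Type*} [NormedAddCommGroup V] [InnerProductSpace ℝ V] [FiniteDimensional ℝ V]
  [MeasurableSpace V] [BorelSpace V]

lemma eLpNorm_fourierInv {H : Type*} [NormedAddCommGroup H] [InnerProductSpace ℂ H]
    [CompleteSpace H] (f : 𝓢(V, H)) : eLpNorm (𝓕⁻ f : 𝓢(V, H)) 2 volume = eLpNorm f 2 volume := by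
  rw [← ENNReal.toReal_eq_toReal_iff' ((𝓕⁻ f).memLp 2 volume).eLpNorm_ne_top
    (f.memLp 2 volume).eLpNorm_ne_top, ← norm_toLp, ← norm_toLp, ← norm_fourier_toL2_eq,
    FourierTransform.fourier_fourierInv_eq]

lemma eLpNorm_fourierMultiplierCLM {H : Type*} [NormedAddCommGroup H] [InnerProductSpace ℂ H]
    [CompleteSpace H] {m : V → ℂ} (hm : m.HasTemperateGrowth) (f : 𝓢(V, H)) :
    eLpNorm (fourierMultiplierCLM H m f) 2 volume
      = eLpNorm (fun ξ => ‖m ξ‖ₑ * ‖𝓕 f ξ‖ₑ) 2 volume := by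
  rw [fourierMultiplierCLM_apply, eLpNorm_fourierInv]
  refine eLpNorm_congr_enorm_ae (.of_forall fun ξ => ?_)
  rw [smulLeftCLM_apply_apply hm, enorm_smul, enorm_eq_self]

variable {E F G : Type*} [NormedAddCommGroup E] [NormedSpace ℂ E] [CompleteSpace E]
  [NormedAddCommGroup F] [NormedSpace ℂ F] [CompleteSpace F]
  [NormedAddCommGroup G] [NormedSpace ℂ G] [CompleteSpace G]

lemma fourier_pairing (B : E →L[ℂ] F →L[ℂ] G) (f : 𝓢(V, E)) (g : 𝓢(V, F)) :
    𝓕 (pairing B f g) = SchwartzMap.convolution B (𝓕 f) (𝓕 g) := by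
  suffices h : pairing B f g = 𝓕⁻ (SchwartzMap.convolution B (𝓕 f) (𝓕 g)) by
    rw [h, FourierTransform.fourier_fourierInv_eq]
  ext x
  calc pairing B f g x = pairing B (𝓕⁻ (𝓕 f)) (𝓕⁻ (𝓕 g)) x := by
        simp only [FourierTransform.fourierInv_fourier_eq]
    _ = 𝓕 (SchwartzMap.convolution B (𝓕 f) (𝓕 g)) (-x) := by
        simp only [fourier_convolution, pairing_apply_apply, fourierInv_coe, fourier_coe,
          Real.fourierInv_eq_fourier_neg]
    _ = 𝓕⁻ (SchwartzMap.convolution B (𝓕 f) (𝓕 g)) x := by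
        rw [fourierInv_coe, fourier_coe, Real.fourierInv_eq_fourier_neg]

lemma enorm_fourier_pairing_le (B : E →L[ℂ] F →L[ℂ] G) (f : 𝓢(V, E)) (g : 𝓢(V, F)) (ξ : V) :
    ‖𝓕 (pairing B f g) ξ‖ₑ ≤ ‖B‖ₑ * ((‖𝓕 f ·‖ₑ) ⋆ₗ (‖𝓕 g ·‖ₑ)) ξ := by
  rw [fourier_pairing, SchwartzMap.convolution_apply, lconvolution_def,
    ← lintegral_const_mul' _ _ enorm_ne_top]
  refine (enorm_integral_le_lintegral_enorm _).trans (lintegral_mono fun η => ?_)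
  simp only [← sub_eq_neg_add, ← mul_assoc]
  exact B.le_opENorm₂ _ _

end Fourier

section HighFreq

variable {V : Type*} [NormedAddCommGroup V]

/-- The part `1_{|ξ| ≥ R} F` of `F` carried by the frequencies of size at least `R`. -/
def highFreq (R : ℝ) (F : V → ℝ≥0∞) : V → ℝ≥0∞ := {ξ | R ≤ ‖ξ‖}.indicator F

variable {F G : V → ℝ≥0∞} {R : ℝ} {ξ : V}

lemma highFreq_of_le (h : R ≤ ‖ξ‖) : highFreq R F ξ = F ξ :=
  Set.indicator_of_mem (s := {ξ | R ≤ ‖ξ‖}) h F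

lemma highFreq_of_lt (h : ‖ξ‖ < R) : highFreq R F ξ = 0 :=
  Set.indicator_of_notMem (s := {ξ | R ≤ ‖ξ‖}) h.not_ge F

variable [MeasurableSpace V] [BorelSpace V] {μ : Measure V}

@[fun_prop]
lemma measurable_highFreq (hF : Measurable F) (R : ℝ) : Measurable (highFreq R F) :=
  hF.indicator (measurableSet_le measurable_const measurable_norm)

-- In a convolution at `ξ` one of the two frequencies `η`, `ξ - η` has size at least `‖ξ‖ / 2`.
lemma lconvolution_le_highFreq_add_highFreq [SecondCountableTopology V] [μ.IsAddLeftInvariant]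
    [μ.IsNegInvariant] (hF : Measurable F) (hG : Measurable G) (hξ : 2 * R ≤ ‖ξ‖) :
    (F ⋆ₗ[μ] G) ξ ≤ (F ⋆ₗ[μ] highFreq R G) ξ + (G ⋆ₗ[μ] highFreq R F) ξ := by
  rw [lconvolution_comm (f := G)]
  simp only [lconvolution_def]
  rw [← lintegral_add_left (by fun_prop)]
  refine lintegral_mono fun η => ?_
  rcases le_or_gt R ‖η‖ with hη | hη
  · exact le_add_left (by rw [highFreq_of_le hη])
  · have htri : ‖ξ‖ ≤ ‖η‖ + ‖-η + ξ‖ := by simpa using norm_add_le η (-η + ξ)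
    exact le_add_right (by rw [highFreq_of_le (by linarith)])

end HighFreq

lemma ellNorm_eq_eLpNorm_count {r : ℝ≥0∞} (hr : r ≠ 0) (a : ℤ → ℝ≥0∞) :
    ellNorm r a = eLpNorm a r Measure.count := by
  rcases eq_or_ne r ∞ with rfl | hr_top
  · simp [ellNorm, eLpNormEssSup]
  · simp [ellNorm, hr_top, eLpNorm_eq_lintegral_rpow_enorm_toReal hr hr_top, lintegral_count]

lemma two_rpow_intCast_add_mul (s : ℝ) (k l : ℤ) :
    (2 : ℝ≥0∞) ^ (((k + l : ℤ) : ℝ) * s) = 2 ^ (k * s) * 2 ^ (l * s) := by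
  rw [Int.cast_add, add_mul, ENNReal.rpow_add _ _ two_ne_zero ENNReal.ofNat_ne_top]

lemma tsum_Iic_two_rpow_ne_top {s : ℝ} (hs : 0 < s) (N : ℤ) :
    ∑' k : Set.Iic N, (2 : ℝ≥0∞) ^ ((k : ℝ) * s) ≠ ∞ := by
  have hinj : Function.Injective fun n : ℕ => N - (n : ℤ) := fun a b h => by simpa using h
  have hsupp : Function.support ((Set.Iic N).indicator fun k : ℤ => (2 : ℝ≥0∞) ^ ((k : ℝ) * s))
      ⊆ Set.range fun n : ℕ => N - (n : ℤ) := fun k hk =>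
    ⟨(N - k).toNat, by
      have hkN : k ≤ N := Set.mem_Iic.1 (Set.mem_of_indicator_ne_zero hk)
      lia⟩
  have hterm (n : ℕ) : (Set.Iic N).indicator (fun k : ℤ => (2 : ℝ≥0∞) ^ ((k : ℝ) * s)) (N - n)
      = 2 ^ (N * s) * (2 ^ (-s)) ^ n := by
    rw [Set.indicator_of_mem (by simp), ← ENNReal.rpow_natCast, ← ENNReal.rpow_mul,
      ← ENNReal.rpow_add _ _ two_ne_zero ENNReal.ofNat_ne_top]
    congr 1
    push_cast
    ring
  rw [tsum_subtype (Set.Iic N) fun k : ℤ => (2 : ℝ≥0∞) ^ ((k : ℝ) * s), ← hinj.tsum_eq hsupp]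
  simp only [hterm, ENNReal.tsum_mul_left, ENNReal.tsum_geometric]
  refine ENNReal.mul_ne_top (by simp [ENNReal.rpow_eq_top_iff]) (ENNReal.inv_ne_top.2 ?_)
  exact (tsub_pos_of_lt
    (ENNReal.rpow_lt_one_of_one_lt_of_neg ENNReal.one_lt_two (neg_neg_of_pos hs))).ne'

namespace LPPair

variable (P : LPPair d)

/-- The modulus `|φ(2^{-q}ξ)|` of the symbol of the block `Δ̇_q`, valued in `ℝ≥0∞` so that Fourier
transforms only enter through their moduli and no integrability has to be tracked. -/
def symbol (q : ℤ) (ξ : Ed d) : ℝ≥0∞ := ‖P.φ ((2 : ℝ) ^ (-q) • ξ)‖ₑ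

@[fun_prop]
lemma measurable_symbol (q : ℤ) : Measurable (P.symbol q) :=
  (P.smooth_φ.continuous.comp (continuous_const_smul _)).enorm.measurable

variable {P} in
lemma norm_mem_Icc_of_symbol_ne_zero {q : ℤ} {ξ : Ed d} (h : P.symbol q ξ ≠ 0) :
    ‖ξ‖ ∈ Set.Icc (3 / 4 * (2 : ℝ) ^ q) (8 / 3 * (2 : ℝ) ^ q) := by
  have hq : (0 : ℝ) < 2 ^ q := by positivity
  have hmem := P.supp_φ (enorm_ne_zero.1 h)
  simpa only [Set.mem_Icc, Set.mem_ofPred_eq, norm_smul, zpow_neg, norm_inv, norm_zpow,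
    Real.norm_ofNat, inv_mul_eq_div, le_div_iff₀ hq, div_le_iff₀ hq] using hmem

lemma hasCompactSupport_φ : HasCompactSupport P.φ :=
  .of_support_subset_isCompact (isCompact_closedBall 0 (8 / 3)) fun _ hξ =>
    mem_closedBall_zero_iff.2 (P.supp_φ hξ).2

lemma exists_symbol_le : ∃ M : ℝ≥0, ∀ q ξ, P.symbol q ξ ≤ M := by
  obtain ⟨C, hC⟩ := P.hasCompactSupport_φ.exists_bound_of_continuous P.smooth_φ.continuous
  exact ⟨C.toNNReal, fun q ξ => enorm_le_coe.2 (NNReal.le_toNNReal_of_coe_le (hC _))⟩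

lemma le_tsum_symbol_mul {ξ : Ed d} (hξ : ξ ≠ 0) (a : ℝ≥0∞) : a ≤ ∑' q, P.symbol q ξ * a := by
  have h_one : 1 ≤ ∑' q, P.symbol q ξ :=
    calc (1 : ℝ≥0∞) = ‖∑' q : ℤ, P.φ ((2 : ℝ) ^ (-q) • ξ)‖ₑ := by
          rw [P.sum_one' ξ hξ, enorm_one]
      _ ≤ ∑' q, P.symbol q ξ := enorm_tsum_le_tsum_enorm
  rw [ENNReal.tsum_mul_right]
  exact le_mul_of_one_le_left' h_one

lemma hasTemperateGrowth_φ_smul (q : ℤ) :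
    Function.HasTemperateGrowth fun ξ : Ed d => (P.φ ((2 : ℝ) ^ (-q) • ξ) : ℂ) := by
  have hc : HasCompactSupport fun ξ : Ed d => (P.φ ((2 : ℝ) ^ (-q) • ξ) : ℂ) :=
    (P.hasCompactSupport_φ.comp_smul (by positivity)).comp_left ofReal_zero
  exact (hc.toSchwartzMap (ofRealCLM.contDiff.comp
    (P.smooth_φ.comp (contDiff_const_smul _)))).hasTemperateGrowth

lemma eLpNorm_lpBlock (q : ℤ) (u : 𝓢(Ed d, ℂ)) :
    eLpNorm (lpBlock P q u) 2 volume = eLpNorm (fun ξ => P.symbol q ξ * ‖𝓕 u ξ‖ₑ) 2 volume := by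
  set m : Ed d → ℂ := fun ξ => P.φ ((2 : ℝ) ^ (-q) • ξ)
  have hm : m.HasTemperateGrowth := P.hasTemperateGrowth_φ_smul q
  have hblock : lpBlock P q u = fourierMultiplierCLM ℂ m u := by
    rw [fourierMultiplierCLM_apply, fourierInv_coe, lpBlock]
    congr 1
    ext ξ
    rw [smulLeftCLM_apply_apply hm, fourier_coe, smul_eq_mul]
  have hsymbol (ξ : Ed d) : ‖m ξ‖ₑ = P.symbol q ξ := by
    rw [symbol, ← ofReal_norm, ← ofReal_norm, norm_real]
  simp only [hblock, eLpNorm_fourierMultiplierCLM hm, hsymbol]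

/-- The `Ḃ^s_{2,r}` norm of a function on the Fourier side, that is, of any `u` with `|𝓕u| = F`. -/
def fourierBesovNorm (s : ℝ) (r : ℝ≥0∞) (F : Ed d → ℝ≥0∞) : ℝ≥0∞ :=
  eLpNorm (fun q : ℤ => (2 : ℝ≥0∞) ^ ((q : ℝ) * s)
    * eLpNorm (fun ξ => P.symbol q ξ * F ξ) 2 volume) r Measure.count

lemma besovNorm_two_eq_fourierBesovNorm (s : ℝ) {r : ℝ≥0∞} (hr : r ≠ 0) (u : 𝓢(Ed d, ℂ)) :
    besovNorm P s 2 r u = P.fourierBesovNorm s r (‖𝓕 u ·‖ₑ) := by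
  simp only [besovNorm, ellNorm_eq_eLpNorm_count hr, eLpNorm_lpBlock, fourierBesovNorm]

variable {F G : Ed d → ℝ≥0∞}

lemma fourierBesovNorm_mono (s : ℝ) (r : ℝ≥0∞) (h : F ≤ G) :
    P.fourierBesovNorm s r F ≤ P.fourierBesovNorm s r G := by
  refine eLpNorm_mono_enorm fun q => mul_right_mono (eLpNorm_mono_enorm fun ξ => ?_)
  exact mul_right_mono (h ξ)

lemma lintegral_symbol_mul_le (hF : Measurable F) (q : ℤ) :
    ∫⁻ ξ, P.symbol q ξ * F ξ ≤ volume (Metric.closedBall (0 : Ed d) (8 / 3)) ^ (1 / 2 : ℝ)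
      * (2 ^ ((q : ℝ) * (d / 2)) * eLpNorm (fun ξ => P.symbol q ξ * F ξ) 2 volume) := by
  set B := Metric.closedBall (0 : Ed d) (2 ^ q * (8 / 3))
  have hsupp : Function.support (fun ξ => P.symbol q ξ * F ξ) ⊆ B := fun ξ hξ => by
    have h := (norm_mem_Icc_of_symbol_ne_zero (left_ne_zero_of_mul hξ)).2
    rwa [mul_comm, ← mem_closedBall_zero_iff] at h
  have hB : volume B ^ (1 / 2 : ℝ) = volume (Metric.closedBall (0 : Ed d) (8 / 3)) ^ (1 / 2 : ℝ)
      * 2 ^ ((q : ℝ) * (d / 2)) := by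
    rw [Measure.addHaar_closedBall_mul _ _ (by positivity) (by positivity),
      finrank_euclideanSpace_fin, mul_comm, ENNReal.mul_rpow_of_nonneg _ _ (by positivity),
      ← Real.rpow_intCast, ← Real.rpow_natCast, ← Real.rpow_mul zero_le_two,
      ← ENNReal.ofReal_rpow_of_pos two_pos, ENNReal.ofReal_ofNat, ← ENNReal.rpow_mul]
    congr 2
    ring
  have hmeas : Measurable fun ξ => P.symbol q ξ * F ξ := by fun_prop
  calc ∫⁻ ξ, P.symbol q ξ * F ξ
      = eLpNorm (fun ξ => P.symbol q ξ * F ξ) 1 (volume.restrict B) := by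
        rw [eLpNorm_one_eq_lintegral_enorm]
        exact (setLIntegral_eq_of_support_subset hsupp).symm
    _ ≤ eLpNorm (fun ξ => P.symbol q ξ * F ξ) 2 (volume.restrict B) * volume B ^ (1 / 2 : ℝ) := by
        refine (eLpNorm_le_eLpNorm_mul_rpow_measure_univ one_le_two
          hmeas.aestronglyMeasurable).trans_eq ?_
        rw [Measure.restrict_apply_univ]
        norm_num
    _ ≤ _ := by
        rw [hB, mul_comm, mul_assoc]
        gcongr
        exact Measure.restrict_le_self

lemma lintegral_le_fourierBesovNorm [NeZero d] (hF : Measurable F) :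
    ∫⁻ ξ, F ξ ≤ volume (Metric.closedBall (0 : Ed d) (8 / 3)) ^ (1 / 2 : ℝ)
      * P.fourierBesovNorm (d / 2) 1 F := by
  have hF_le : ∀ᵐ ξ : Ed d, F ξ ≤ ∑' q, P.symbol q ξ * F ξ := by
    filter_upwards [Measure.ae_ne volume 0] with ξ hξ using P.le_tsum_symbol_mul hξ _
  calc ∫⁻ ξ, F ξ ≤ ∫⁻ ξ, ∑' q, P.symbol q ξ * F ξ := lintegral_mono_ae hF_le
    _ = ∑' q, ∫⁻ ξ, P.symbol q ξ * F ξ := lintegral_tsum fun q => by fun_prop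
    _ ≤ ∑' q, _ := ENNReal.tsum_le_tsum (P.lintegral_symbol_mul_le hF)
    _ = _ := by
        simp only [ENNReal.tsum_mul_left, fourierBesovNorm, eLpNorm_one_eq_lintegral_enorm,
          lintegral_count, enorm_eq_self]

variable {P} in
lemma symbol_neg_add_eq_zero {k q : ℤ} {ξ : Ed d} (hk : 2 < k) (hξ : 3 / 8 * 2 ^ q ≤ ‖ξ‖) :
    P.symbol (-k + q) ξ = 0 := by
  by_contra h
  have hpow : (2 : ℝ) ^ (-k + q) ≤ 2 ^ (-3 + q) := zpow_le_zpow_right₀ one_le_two (by lia)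
  rw [zpow_add₀ two_ne_zero (-3)] at hpow
  have hq : (0 : ℝ) < 2 ^ q := by positivity
  norm_num at hpow
  linarith [(norm_mem_Icc_of_symbol_ne_zero h).2]

lemma highFreq_le_tsum (q : ℤ) (ξ : Ed d) :
    highFreq (3 / 8 * 2 ^ q) F ξ ≤ ∑' k : Set.Iic (2 : ℤ), P.symbol (-k + q) ξ * F ξ := by
  rcases lt_or_ge ‖ξ‖ (3 / 8 * 2 ^ q) with hlow | hhigh
  · simp only [highFreq_of_lt hlow, zero_le]
  have hξ : ξ ≠ 0 := norm_pos_iff.1 (lt_of_lt_of_le (by positivity) hhigh)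
  have hsupp : Function.support (fun k : ℤ => P.symbol (-k + q) ξ * F ξ) ⊆ Set.Iic 2 :=
    fun k hk => by
      contrapose! hk
      simp [symbol_neg_add_eq_zero (not_le.1 hk) hhigh]
  calc highFreq (3 / 8 * 2 ^ q) F ξ = F ξ := highFreq_of_le hhigh
    _ ≤ ∑' p, P.symbol p ξ * F ξ := P.le_tsum_symbol_mul hξ _
    _ = ∑' k, P.symbol (-k + q) ξ * F ξ :=
      (((Equiv.neg ℤ).trans (Equiv.addRight q)).tsum_eq fun p => P.symbol p ξ * F ξ).symm
    _ = _ := (tsum_subtype_eq_of_support_subset hsupp).symm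

lemma eLpNorm_highFreq_le_tsum (hF : Measurable F) (q : ℤ) :
    eLpNorm (highFreq (3 / 8 * 2 ^ q) F) 2 volume
      ≤ ∑' k : Set.Iic (2 : ℤ), eLpNorm (fun ξ => P.symbol (-k + q) ξ * F ξ) 2 volume :=
  (eLpNorm_mono_enorm (P.highFreq_le_tsum q)).trans
    (eLpNorm_tsum_le (fun k => by fun_prop) one_le_two)

lemma eLpNorm_two_rpow_mul_highFreq_le (s : ℝ) {r : ℝ≥0∞} (hr : 1 ≤ r) (hF : Measurable F) :
    eLpNorm (fun q : ℤ => (2 : ℝ≥0∞) ^ ((q : ℝ) * s)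
        * eLpNorm (highFreq (3 / 8 * 2 ^ q) F) 2 volume) r Measure.count
      ≤ (∑' k : Set.Iic (2 : ℤ), (2 : ℝ≥0∞) ^ ((k : ℝ) * s)) * P.fourierBesovNorm s r F := by
  set w : ℤ → ℝ≥0∞ := (Set.Iic 2).indicator fun k : ℤ => 2 ^ ((k : ℝ) * s)
  set a : ℤ → ℝ≥0∞ := fun q => 2 ^ ((q : ℝ) * s)
    * eLpNorm (fun ξ => P.symbol q ξ * F ξ) 2 volume
  have hconv (q : ℤ) : 2 ^ ((q : ℝ) * s) * eLpNorm (highFreq (3 / 8 * 2 ^ q) F) 2 volume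
      ≤ (w ⋆ₗ[Measure.count] a) q := by
    have hsplit (k : ℤ) : (2 : ℝ≥0∞) ^ ((q : ℝ) * s)
        = 2 ^ ((k : ℝ) * s) * 2 ^ (((-k + q : ℤ) : ℝ) * s) := by
      rw [← two_rpow_intCast_add_mul, add_neg_cancel_left]
    calc 2 ^ ((q : ℝ) * s) * eLpNorm (highFreq (3 / 8 * 2 ^ q) F) 2 volume
      _ ≤ 2 ^ ((q : ℝ) * s) * ∑' k : Set.Iic (2 : ℤ),
          eLpNorm (fun ξ => P.symbol (-k + q) ξ * F ξ) 2 volume := by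
        gcongr
        exact P.eLpNorm_highFreq_le_tsum hF q
      _ = ∑' k : Set.Iic (2 : ℤ), 2 ^ ((k : ℝ) * s) * a (-k + q) := by
        rw [← ENNReal.tsum_mul_left]
        exact tsum_congr fun k => by rw [hsplit k, mul_assoc]
      _ = (w ⋆ₗ[Measure.count] a) q := by
        rw [tsum_subtype (Set.Iic 2) fun k : ℤ => 2 ^ ((k : ℝ) * s) * a (-k + q),
          lconvolution_def, lintegral_count]
        exact tsum_congr fun k => Set.indicator_mul_left ..
  calc _ ≤ eLpNorm (w ⋆ₗ[Measure.count] a) r Measure.count := eLpNorm_mono_enorm hconv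
    _ ≤ _ := eLpNorm_lconvolution_le (by fun_prop) (by fun_prop) hr
    _ = _ := by
      rw [lintegral_count, fourierBesovNorm,
        tsum_subtype (Set.Iic 2) fun k : ℤ => (2 : ℝ≥0∞) ^ ((k : ℝ) * s)]

lemma eLpNorm_symbol_mul_lconvolution_le {p : ℝ≥0∞} (hp : 1 ≤ p) {M : ℝ≥0∞} {q : ℤ}
    (hM : ∀ ξ, P.symbol q ξ ≤ M) (hF : Measurable F) (hG : Measurable G) :
    eLpNorm (fun ξ => P.symbol q ξ * (F ⋆ₗ G) ξ) p volume
      ≤ M * ((∫⁻ ξ, F ξ) * eLpNorm (highFreq (3 / 8 * 2 ^ q) G) p volume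
        + (∫⁻ ξ, G ξ) * eLpNorm (highFreq (3 / 8 * 2 ^ q) F) p volume) := by
  set F' := highFreq (3 / 8 * 2 ^ q) F
  set G' := highFreq (3 / 8 * 2 ^ q) G
  have hF' : Measurable F' := measurable_highFreq hF _
  have hG' : Measurable G' := measurable_highFreq hG _
  have hpoint (ξ : Ed d) : P.symbol q ξ * (F ⋆ₗ G) ξ ≤ M * ((F ⋆ₗ G') ξ + (G ⋆ₗ F') ξ) := by
    rcases eq_or_ne (P.symbol q ξ) 0 with h | h
    · simp [h]
    · have hξ := (norm_mem_Icc_of_symbol_ne_zero h).1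
      gcongr
      · exact hM ξ
      · exact lconvolution_le_highFreq_add_highFreq hF hG (by linarith)
  calc _ ≤ M * eLpNorm ((F ⋆ₗ G') + (G ⋆ₗ F')) p volume :=
        eLpNorm_le_mul_eLpNorm_of_ae_le_mul'' p (by measurability) (.of_forall hpoint)
    _ ≤ M * (eLpNorm (F ⋆ₗ G') p volume + eLpNorm (G ⋆ₗ F') p volume) := by
        gcongr
        exact eLpNorm_add_le (by measurability) (by measurability) hp
    _ ≤ _ := by
        gcongr
        · exact eLpNorm_lconvolution_le hF.aemeasurable hG'.aemeasurable hp
        · exact eLpNorm_lconvolution_le hG.aemeasurable hF'.aemeasurable hp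

lemma fourierBesovNorm_lconvolution_le_lintegral {M : ℝ≥0∞} (hM : ∀ q ξ, P.symbol q ξ ≤ M)
    (s : ℝ) {r : ℝ≥0∞} (hr : 1 ≤ r) (hF : Measurable F) (hG : Measurable G) :
    P.fourierBesovNorm s r (F ⋆ₗ G)
      ≤ M * (∑' k : Set.Iic (2 : ℤ), (2 : ℝ≥0∞) ^ ((k : ℝ) * s))
        * ((∫⁻ ξ, F ξ) * P.fourierBesovNorm s r G
          + P.fourierBesovNorm s r F * ∫⁻ ξ, G ξ) := by
  set A : (Ed d → ℝ≥0∞) → ℤ → ℝ≥0∞ := fun H q =>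
    2 ^ ((q : ℝ) * s) * eLpNorm (highFreq (3 / 8 * 2 ^ q) H) 2 volume
  have hA (H : Ed d → ℝ≥0∞) : AEStronglyMeasurable (A H) Measure.count :=
    Measurable.of_discrete.aestronglyMeasurable
  have hblock (q : ℤ) : 2 ^ ((q : ℝ) * s)
      * eLpNorm (fun ξ => P.symbol q ξ * (F ⋆ₗ G) ξ) 2 volume
      ≤ M * ((∫⁻ ξ, F ξ) * A G q + (∫⁻ ξ, G ξ) * A F q) :=
    (mul_right_mono
      (P.eLpNorm_symbol_mul_lconvolution_le one_le_two (hM q) hF hG)).trans_eq (by ring)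
  have hscale (c : ℝ≥0∞) (H : Ed d → ℝ≥0∞) :
      eLpNorm (fun q => c * A H q) r Measure.count ≤ c * eLpNorm (A H) r Measure.count :=
    eLpNorm_le_mul_eLpNorm_of_ae_le_mul'' r (hA H) (.of_forall fun q => le_rfl)
  calc P.fourierBesovNorm s r (F ⋆ₗ G)
      ≤ M * eLpNorm ((fun q => (∫⁻ ξ, F ξ) * A G q) + fun q => (∫⁻ ξ, G ξ) * A F q) r
          Measure.count :=
        eLpNorm_le_mul_eLpNorm_of_ae_le_mul'' r Measurable.of_discrete.aestronglyMeasurable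
          (.of_forall hblock)
    _ ≤ M * ((∫⁻ ξ, F ξ) * eLpNorm (A G) r Measure.count
          + (∫⁻ ξ, G ξ) * eLpNorm (A F) r Measure.count) := by
        gcongr
        refine (eLpNorm_add_le Measurable.of_discrete.aestronglyMeasurable
          Measurable.of_discrete.aestronglyMeasurable hr).trans ?_
        gcongr <;> exact hscale _ _
    _ ≤ M * ((∫⁻ ξ, F ξ) * (_ * P.fourierBesovNorm s r G)
          + (∫⁻ ξ, G ξ) * (_ * P.fourierBesovNorm s r F)) := by
        gcongr
        · exact P.eLpNorm_two_rpow_mul_highFreq_le s hr hG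
        · exact P.eLpNorm_two_rpow_mul_highFreq_le s hr hF
    _ = _ := by ring

lemma fourierBesovNorm_lconvolution_le [NeZero d] {M : ℝ≥0∞} (hM : ∀ q ξ, P.symbol q ξ ≤ M)
    (s : ℝ) {r : ℝ≥0∞} (hr : 1 ≤ r) (hF : Measurable F) (hG : Measurable G) :
    P.fourierBesovNorm s r (F ⋆ₗ G)
      ≤ M * (∑' k : Set.Iic (2 : ℤ), (2 : ℝ≥0∞) ^ ((k : ℝ) * s))
        * volume (Metric.closedBall (0 : Ed d) (8 / 3)) ^ (1 / 2 : ℝ)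
        * (P.fourierBesovNorm (d / 2) 1 F * P.fourierBesovNorm s r G
          + P.fourierBesovNorm s r F * P.fourierBesovNorm (d / 2) 1 G) := by
  refine (P.fourierBesovNorm_lconvolution_le_lintegral hM s hr hF hG).trans ?_
  rw [mul_assoc _ (_ ^ _)]
  gcongr
  calc _ ≤ volume (Metric.closedBall (0 : Ed d) (8 / 3)) ^ (1 / 2 : ℝ)
          * P.fourierBesovNorm (d / 2) 1 F * P.fourierBesovNorm s r G
        + P.fourierBesovNorm s r F * (volume (Metric.closedBall (0 : Ed d) (8 / 3)) ^ (1 / 2 : ℝ)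
          * P.fourierBesovNorm (d / 2) 1 G) := by
        gcongr
        · exact P.lintegral_le_fourierBesovNorm hF
        · exact P.lintegral_le_fourierBesovNorm hG
    _ = _ := by ring

lemma fourierBesovNorm_enorm_fourier_mul_le (s : ℝ) (r : ℝ≥0∞) (u v : 𝓢(Ed d, ℂ)) :
    P.fourierBesovNorm s r (‖𝓕 (pairing (ContinuousLinearMap.mul ℂ ℂ) u v) ·‖ₑ)
      ≤ P.fourierBesovNorm s r ((‖𝓕 u ·‖ₑ) ⋆ₗ (‖𝓕 v ·‖ₑ)) := by
  refine P.fourierBesovNorm_mono s r fun ξ => (enorm_fourier_pairing_le _ u v ξ).trans_eq ?_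
  rw [← ofReal_norm, ContinuousLinearMap.opNorm_mul, ENNReal.ofReal_one, one_mul]

end LPPair

theorem stmt10_general {d : ℕ} (hd : 1 ≤ d) (P : LPPair d) {s : ℝ} (hs : 0 < s) {r : ℝ≥0∞}
    (hr : 1 ≤ r) :
    ∃ C : ℝ≥0, 0 < C ∧ ∀ u v : 𝓢(Ed d, ℂ),
      besovNorm P s 2 r (fun x => u x * v x)
        ≤ C * (besovNorm P (d / 2) 2 1 u * besovNorm P s 2 r v
          + besovNorm P s 2 r u * besovNorm P (d / 2) 2 1 v) := by
  have : NeZero d := ⟨by lia⟩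
  have hr₀ : r ≠ 0 := (zero_lt_one.trans_le hr).ne'
  obtain ⟨M, hM⟩ := P.exists_symbol_le
  set c : ℝ≥0∞ := M * (∑' k : Set.Iic (2 : ℤ), (2 : ℝ≥0∞) ^ ((k : ℝ) * s))
    * volume (Metric.closedBall (0 : Ed d) (8 / 3)) ^ (1 / 2 : ℝ)
  have hc : c ≠ ∞ := ENNReal.mul_ne_top
    (ENNReal.mul_ne_top ENNReal.coe_ne_top (tsum_Iic_two_rpow_ne_top hs 2))
    (ENNReal.rpow_ne_top_of_nonneg one_half_pos.le measure_closedBall_lt_top.ne)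
  refine ⟨c.toNNReal + 1, by positivity, fun u v => ?_⟩
  have hprod : (fun x => u x * v x) = pairing (ContinuousLinearMap.mul ℂ ℂ) u v := rfl
  have hmeas (w : 𝓢(Ed d, ℂ)) : Measurable (‖𝓕 w ·‖ₑ) := (𝓕 w).continuous.enorm.measurable
  simp only [hprod, P.besovNorm_two_eq_fourierBesovNorm s hr₀,
    P.besovNorm_two_eq_fourierBesovNorm (d / 2) one_ne_zero]
  refine (P.fourierBesovNorm_enorm_fourier_mul_le s r u v).trans <|
    (P.fourierBesovNorm_lconvolution_le hM s hr (hmeas u) (hmeas v)).trans ?_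
  rw [ENNReal.coe_add, ENNReal.coe_toNNReal hc]
  gcongr
  exact le_self_add

/-- `‖uv‖_{Ḃ^{d/2}_{2,1}} ≤ C‖u‖_{Ḃ^{d/2}_{2,1}}‖v‖_{Ḃ^{d/2}_{2,1}}`. -/
theorem stmt10 {d : ℕ} (hd : 1 ≤ d) (P : LPPair d) :
    ∃ C : ℝ≥0, 0 < C ∧ ∀ u v : 𝓢(Ed d, ℂ),
      besovNorm P ((d : ℝ)/2) 2 1 (fun x => u x * v x)
        ≤ C * besovNorm P ((d : ℝ)/2) 2 1 ⇑u * besovNorm P ((d : ℝ)/2) 2 1 ⇑v := by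
  have hd₀ : 0 < (d : ℝ) / 2 := by positivity
  obtain ⟨C, hC, h⟩ := stmt10_general hd P hd₀ le_rfl
  exact ⟨2 * C, by positivity, fun u v => (h u v).trans_eq (by push_cast; ring)⟩
end
end
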